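/- Let $k$ be an algebraically closed field of characteristic zero, $V$ a finite-dimensional $k$-vector space, and $G \subseteq \mathrm{GL}(V)$ a connected semisimple algebraic group with $\dim V/\!\!/G = 1$. Then the nullcone $\mathcal{N}_{G,V}$ is an irreducible algebraic variety. -/

import Mathlib

open MvPolynomial

noncomputable section

/-- The Zariski topology on affine space `σ → k`. -/
def zTop (k : Type*) [CommSemiring k] (σ : Type*) : TopologicalSpace (σ → k) :=
  TopologicalSpace.generateFrom
    {U | ∃ p : MvPolynomial σ k, U = {x | MvPolynomial.eval x p ≠ 0}}

/-- Zariski topology on square matrices. -/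
def mTop (k : Type*) [CommSemiring k] (n : ℕ) : TopologicalSpace (Matrix (Fin n) (Fin n) k) :=
  TopologicalSpace.induced (fun M (p : Fin n × Fin n) => M p.1 p.2) (zTop k (Fin n × Fin n))

/-- Zariski topology on `GL n k` induced from matrices. -/
def glTop (k : Type*) [CommRing k] (n : ℕ) : TopologicalSpace (GL (Fin n) k) :=
  TopologicalSpace.induced (fun g => (g : Matrix (Fin n) (Fin n) k)) (mTop k n)

variable (k : Type*) [Field k] {n : ℕ}

/-- The orbit of a vector under a subgroup of `GL n k` acting on `kⁿ`. -/
def orbitOf (G : Subgroup (GL (Fin n) k)) (v : Fin n → k) : Set (Fin n → k) :=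
  {w | ∃ g ∈ G, (g : Matrix (Fin n) (Fin n) k).mulVec v = w}

/-- The algebra of `G`-invariant polynomial functions on `kⁿ`, i.e. `k[V]^G`. -/
def invAlg (G : Subgroup (GL (Fin n) k)) : Subalgebra k (MvPolynomial (Fin n) k) where
  carrier := {p | ∀ g ∈ G, ∀ v : Fin n → k,
    eval ((g : Matrix (Fin n) (Fin n) k).mulVec v) p = eval v p}
  mul_mem' := by intro p q hp hq g hg v; simp [map_mul, hp g hg v, hq g hg v]
  add_mem' := by intro p q hp hq g hg v; simp [map_add, hp g hg v, hq g hg v]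
  algebraMap_mem' := by intro r g hg v; simp

/-- The nullcone `𝒩_{G,V} = π⁻¹(π(0))`: the set of points where every invariant takes the
same value as at the origin. -/
def nullcone (G : Subgroup (GL (Fin n) k)) : Set (Fin n → k) :=
  {v | ∀ p ∈ invAlg k G, eval v p = eval (0 : Fin n → k) p}

/-- Krull dimension of a subset of affine space for the Zariski topology. -/
def setDim {n : ℕ} (s : Set (Fin n → k)) : WithBot (WithTop ℕ) :=
  @topologicalKrullDim s (TopologicalSpace.induced ((↑) : s → (Fin n → k)) (zTop k (Fin n)))

/-- `G` is a Zariski-closed subgroup of `GL n k` (an algebraic subgroup). -/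
def IsAlgSubgroup (G : Subgroup (GL (Fin n) k)) : Prop :=
  @IsClosed _ (glTop k n) (G : Set (GL (Fin n) k))

/-- `G` is connected in the Zariski topology. -/
def IsConnectedSub (G : Subgroup (GL (Fin n) k)) : Prop :=
  @IsConnected _ (glTop k n) (G : Set (GL (Fin n) k))

/-- `G` is semisimple: its radical is trivial, i.e. every Zariski-closed connected solvable
normal subgroup of `G` is trivial. -/
def IsSemisimpleSub (G : Subgroup (GL (Fin n) k)) : Prop :=
  ∀ H : Subgroup (GL (Fin n) k), H ≤ G → (H.subgroupOf G).Normal → IsSolvable H →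
    @IsClosed _ (glTop k n) (H : Set (GL (Fin n) k)) →
    @IsConnected _ (glTop k n) (H : Set (GL (Fin n) k)) → H = ⊥

section mine1
open MvPolynomial TensorProduct

theorem exists_derivation_ne {k K : Type*} [Field k] [CharZero k] [Field K] [Algebra k K]
    (c : K) (hc : Transcendental k c) : ∃ d : Derivation k K K, d c ≠ 0 := by
  have hci : AlgebraicIndepOn k id ({c} : Set K) := by
    have := (algebraicIndependent_unique_type_iff (R := k) (ι := ({c} : Set K))
      (x := fun i => (i : K))).2 (by
        have : ((default : ({c} : Set K)) : K) = c := (default : ({c} : Set K)).2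
        rw [this]; exact hc)
    exact this
  obtain ⟨s, hcs, hs⟩ := exists_isTranscendenceBasis_superset hci
  let B := MvPolynomial s k
  let f : B →ₐ[k] K := aeval (fun i : s => (i : K))
  have hf : Function.Injective f := hs.1
  let : Algebra B K := f.toRingHom.toAlgebra
  have : IsScalarTower k B K := IsScalarTower.of_algebraMap_eq (fun r => (f.commutes r).symm)
  have : FaithfulSMul B K := (faithfulSMul_iff_algebraMap_injective B K).2 hf
  let F := FractionRing B
  let : Algebra F K := FractionRing.liftAlgebra B K
  have : IsScalarTower B F K := FractionRing.isScalarTower_liftAlgebra B K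
  have : Algebra.IsAlgebraic B K := by
    have h := hs.isAlgebraic
    exact Algebra.IsAlgebraic.of_ringHom_of_comp_eq hs.1.aevalEquiv.toRingEquiv.toRingHom
      (RingHom.id K) hs.1.aevalEquiv.surjective Function.injective_id (by
        ext p
        · rfl
        · simp only [RingHom.algebraMap_toAlgebra, f]
          refine Eq.trans ?_ (aeval_X (fun i : s => (i : K)) p).symm
          simp)
  have : Algebra.IsAlgebraic F K := by
    exact (IsFractionRing.comap_isAlgebraic_iff (A := B) (K := F) (C := K)).1 inferInstance
  have : CharZero F := charZero_of_injective_algebraMap (R := k) (algebraMap k F).injective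
  have : Algebra.FormallyEtale F K := Algebra.FormallyEtale.of_isSeparable F K
  have : Algebra.FormallyEtale B F := Algebra.FormallyEtale.of_isLocalization (nonZeroDivisors B)
  have : Algebra.FormallyEtale B K := Algebra.FormallyEtale.comp B F K
  let e := KaehlerDifferential.tensorKaehlerEquivOfFormallyEtale k B K
  let i0 : s := ⟨c, hcs rfl⟩
  let b := (KaehlerDifferential.mvPolynomialBasis k s).baseChange K
  let l : Ω[K⁄k] →ₗ[K] K := (b.coord i0) ∘ₗ e.symm.toLinearMap
  refine ⟨l.compDer (KaehlerDifferential.D k K), ?_⟩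
  have h1 : c = algebraMap B K (X i0) := by
    exact (aeval_X (fun i : s => (i : K)) i0).symm
  have h2 : e.symm (KaehlerDifferential.D k K c) = b i0 := by
    rw [h1, KaehlerDifferential.tensorKaehlerEquivOfFormallyEtale_symm_D_algebraMap]
    simp only [b, Module.Basis.baseChange_apply, KaehlerDifferential.mvPolynomialBasis_apply]
    rfl
  have : (l.compDer (KaehlerDifferential.D k K)) c = 1 := by
    show b.repr (e.symm (KaehlerDifferential.D k K c)) i0 = 1
    rw [h2]; simp
  rw [this]; exact one_ne_zero

end mine1

section mine
variable {k : Type*} [Field k] {n : ℕ}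

/-- Evaluation of a polynomial in matrix entries at a matrix over an algebra. -/
def ev {R : Type*} [CommRing R] [Algebra k R] (Y : Matrix (Fin n) (Fin n) R) :
    MvPolynomial (Fin n × Fin n) k →ₐ[k] R := aeval (fun ij => Y ij.1 ij.2)

theorem ev_X {R : Type*} [CommRing R] [Algebra k R] (Y : Matrix (Fin n) (Fin n) R)
    (ij : Fin n × Fin n) : ev (k := k) Y (X ij) = Y ij.1 ij.2 := by simp [ev]

theorem ev_map {R R' : Type*} [CommRing R] [Algebra k R] [CommRing R'] [Algebra k R']
    (f : R →ₐ[k] R') (Y : Matrix (Fin n) (Fin n) R) (p : MvPolynomial (Fin n × Fin n) k) :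
    f (ev Y p) = ev (Y.map f) p := by
  have h : f.comp (ev Y) = ev (Y.map f) := by
    apply MvPolynomial.algHom_ext
    intro i
    simp [ev_X]
  exact congrArg (fun g => g p) h

/-- The directional derivative. -/
def Td {R : Type*} [CommRing R] [Algebra k R] (Y W : Matrix (Fin n) (Fin n) R)
    (p : MvPolynomial (Fin n × Fin n) k) : R :=
  ∑ ij : Fin n × Fin n, ev Y (pderiv ij p) * W ij.1 ij.2

section
variable {R : Type*} [CommRing R] [Algebra k R] (Y W : Matrix (Fin n) (Fin n) R)

theorem Td_add (p q : MvPolynomial (Fin n × Fin n) k) :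
    Td Y W (p + q) = Td Y W p + Td Y W q := by
  simp [Td, add_mul, Finset.sum_add_distrib]

theorem Td_mul (p q : MvPolynomial (Fin n × Fin n) k) :
    Td Y W (p * q) = ev Y p * Td Y W q + ev Y q * Td Y W p := by
  simp only [Td, Derivation.leibniz, smul_eq_mul, map_add, map_mul, add_mul,
    Finset.sum_add_distrib, Finset.mul_sum, mul_assoc]

theorem Td_C (a : k) : Td Y W (C a) = 0 := by simp [Td]

theorem Td_smul (a : k) (p : MvPolynomial (Fin n × Fin n) k) :
    Td Y W (a • p) = a • Td Y W p := by
  simp [Td, Finset.smul_sum]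

theorem Td_X (ij : Fin n × Fin n) : Td (k := k) Y W (X ij) = W ij.1 ij.2 := by
  classical
  simp only [Td, pderiv_X]
  rw [Finset.sum_eq_single ij]
  · simp
  · intro b _ hb
    rw [Pi.single_eq_of_ne hb.symm]; simp
  · simp

theorem Td_sub (p q : MvPolynomial (Fin n × Fin n) k) :
    Td Y W (p - q) = Td Y W p - Td Y W q := by
  simp [Td, sub_mul, Finset.sum_sub_distrib]

theorem Td_sum {ι : Type*} (s : Finset ι) (f : ι → MvPolynomial (Fin n × Fin n) k) :
    Td Y W (∑ i ∈ s, f i) = ∑ i ∈ s, Td Y W (f i) := by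
  classical
  induction s using Finset.induction_on with
  | empty => simp [Td]
  | insert a s ha ih => rw [Finset.sum_insert ha, Finset.sum_insert ha, Td_add, ih]

theorem Td_map {R' : Type*} [CommRing R'] [Algebra k R']
    (f : R →ₐ[k] R') (p : MvPolynomial (Fin n × Fin n) k) :
    f (Td Y W p) = Td (Y.map f) (W.map f) p := by
  simp [Td, ev_map]

/-- chain rule -/
theorem deriv_ev (d : Derivation k R R) (p : MvPolynomial (Fin n × Fin n) k) :
    d (ev Y p) = Td Y (Y.map d) p := by
  induction p using MvPolynomial.induction_on with
  | C a => simp [Td_C, ev]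
  | add p q hp hq => simp [hp, hq, Td_add]
  | mul_X p i hp => simp [Td_mul, Td_X, hp, ev_X]

theorem Td_smul_right (c : R) (p : MvPolynomial (Fin n × Fin n) k) :
    Td Y (c • W) p = c * Td Y W p := by
  simp only [Td, Finset.mul_sum, Matrix.smul_apply, smul_eq_mul]
  exact Finset.sum_congr rfl fun _ _ => by ring

theorem Td_add_right (W' : Matrix (Fin n) (Fin n) R) (p : MvPolynomial (Fin n × Fin n) k) :
    Td Y (W + W') p = Td Y W p + Td Y W' p := by
  simp [Td, mul_add, Finset.sum_add_distrib]

end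

/-- The generic matrix. -/
def genM (k : Type*) [Field k] (n : ℕ) :
    Matrix (Fin n) (Fin n) (MvPolynomial (Fin n × Fin n) k) := fun i j => X (i, j)

/-- Two-sided translation of polynomials : `p ↦ p (a X b)`. -/
def tr2 (a b : Matrix (Fin n) (Fin n) k) :
    MvPolynomial (Fin n × Fin n) k →ₐ[k] MvPolynomial (Fin n × Fin n) k :=
  ev (a.map C * (genM k n) * b.map C)

theorem genmat_map {R : Type*} [CommRing R] [Algebra k R] (Y : Matrix (Fin n) (Fin n) R) :
    (genM k n).map (ev Y) = Y := by
  ext i j; simp [ev_X, genM]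

theorem ev_tr2 {R : Type*} [CommRing R] [Algebra k R] (Y : Matrix (Fin n) (Fin n) R)
    (a b : Matrix (Fin n) (Fin n) k) (p : MvPolynomial (Fin n × Fin n) k) :
    ev Y (tr2 a b p) = ev (a.map (algebraMap k R) * Y * b.map (algebraMap k R)) p := by
  unfold tr2
  rw [ev_map]
  congr 2
  rw [Matrix.map_mul, Matrix.map_mul, genmat_map]
  have h : ∀ c : Matrix (Fin n) (Fin n) k, (c.map C).map (ev (k := k) Y)
      = c.map (algebraMap k R) := by
    intro c; ext i j; simp [ev]
  rw [h, h]

theorem Td_tr2 {R : Type*} [CommRing R] [Algebra k R] (Y W : Matrix (Fin n) (Fin n) R)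
    (a b : Matrix (Fin n) (Fin n) k) (p : MvPolynomial (Fin n × Fin n) k) :
    Td Y W (tr2 a b p) = Td (a.map (algebraMap k R) * Y * b.map (algebraMap k R))
      (a.map (algebraMap k R) * W * b.map (algebraMap k R)) p := by
  induction p using MvPolynomial.induction_on with
  | C a => rw [Td_C, MvPolynomial.C_eq_algebraMap] ; simp only [AlgHom.commutes]; rw [← C_eq_algebraMap, Td_C]
  | add p q hp hq => simp [hp, hq, Td_add]
  | mul_X p i hp =>
    rw [map_mul, Td_mul, Td_mul, hp, Td_X, ev_tr2, ev_tr2, ev_X]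
    congr 2
    simp only [tr2, ev_X, Matrix.mul_apply, Finset.sum_mul, Matrix.map_apply, genM,
      Td_sum, Td_mul, Td_X, Td_C]
    simp [ev]
    refine Finset.sum_congr rfl fun _ _ => Finset.sum_congr rfl fun _ _ => by ring


/-- The ideal of polynomials vanishing on `G`. -/
def vI (G : Subgroup (GL (Fin n) k)) : Ideal (MvPolynomial (Fin n × Fin n) k) where
  carrier := {p | ∀ g ∈ G, ev (g : Matrix (Fin n) (Fin n) k) p = 0}
  add_mem' := by intro p q hp hq g hg; simp [hp g hg, hq g hg]
  zero_mem' := by intro g hg; simp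
  smul_mem' := by intro c p hp g hg; simp [hp g hg]

theorem mem_vI {G : Subgroup (GL (Fin n) k)} {p : MvPolynomial (Fin n × Fin n) k} :
    p ∈ vI G ↔ ∀ g ∈ G, ev (g : Matrix (Fin n) (Fin n) k) p = 0 := Iff.rfl

theorem map_algebraMap_self (a : Matrix (Fin n) (Fin n) k) : a.map (algebraMap k k) = a := by
  ext i j; simp

theorem tr2_mem_vI {G : Subgroup (GL (Fin n) k)} {p : MvPolynomial (Fin n × Fin n) k}
    (hp : p ∈ vI G) {a b : GL (Fin n) k} (ha : a ∈ G) (hb : b ∈ G) : tr2 (a : Matrix _ _ k) (b : Matrix _ _ k) p ∈ vI G := by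
  intro g hg
  rw [ev_tr2, map_algebraMap_self, map_algebraMap_self]
  have := hp (a * g * b) (G.mul_mem (G.mul_mem ha hg) hb)
  simpa using this

/-- The derivation `p ↦ (Y ↦ d p_Y (Y x))`. -/
def Dx (x : Matrix (Fin n) (Fin n) k) :
    Derivation k (MvPolynomial (Fin n × Fin n) k) (MvPolynomial (Fin n × Fin n) k) :=
  mkDerivation k (fun ij => ((genM k n) * x.map C : Matrix (Fin n) (Fin n) (MvPolynomial (Fin n × Fin n) k)) ij.1 ij.2)

theorem ev_Dx {R : Type*} [CommRing R] [Algebra k R] (Y : Matrix (Fin n) (Fin n) R)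
    (x : Matrix (Fin n) (Fin n) k) (p : MvPolynomial (Fin n × Fin n) k) :
    ev Y (Dx x p) = Td Y (Y * x.map (algebraMap k R)) p := by
  induction p using MvPolynomial.induction_on with
  | C a => simp [Td_C]
  | add p q hp hq => simp [hp, hq, Td_add]
  | mul_X p i hp =>
    rw [Derivation.leibniz, Td_mul, Td_X, ← hp, Dx, mkDerivation_X]
    simp [ev_X, Matrix.mul_apply, genM]

/-- The Lie algebra of `G` : tangent space at the identity. -/
def gL (G : Subgroup (GL (Fin n) k)) : Submodule k (Matrix (Fin n) (Fin n) k) where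
  carrier := {x | ∀ p ∈ vI G, Td 1 x p = 0}
  add_mem' := by intro x y hx hy p hp; rw [Td_add_right, hx p hp, hy p hp, add_zero]
  zero_mem' := by intro p hp; simp [Td]
  smul_mem' := by intro c x hx p hp; rw [Td_smul_right, hx p hp, mul_zero]

theorem mem_gL {G : Subgroup (GL (Fin n) k)} {x : Matrix (Fin n) (Fin n) k} :
    x ∈ gL G ↔ ∀ p ∈ vI G, Td 1 x p = 0 := Iff.rfl

theorem Dx_mem {G : Subgroup (GL (Fin n) k)} {x : Matrix (Fin n) (Fin n) k} (hx : x ∈ gL G)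
    {p : MvPolynomial (Fin n × Fin n) k} (hp : p ∈ vI G) : Dx x p ∈ vI G := by
  intro g hg
  have := hx _ (tr2_mem_vI hp hg G.one_mem)
  rw [Td_tr2] at this
  rw [ev_Dx]
  simpa [map_algebraMap_self] using this

theorem Dx_lie (x y : Matrix (Fin n) (Fin n) k) (p : MvPolynomial (Fin n × Fin n) k) :
    Dx (x * y - y * x) p = Dx x (Dx y p) - Dx y (Dx x p) := by
  have h : Dx (x * y - y * x) = ⁅Dx x, Dx y⁆ := by
    apply MvPolynomial.derivation_ext
    intro ij
    have key : ∀ x y : Matrix (Fin n) (Fin n) k, Dx x (Dx y (X ij)) =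
        ((genM k n) * (x * y).map C : Matrix (Fin n) (Fin n) (MvPolynomial (Fin n × Fin n) k)) ij.1 ij.2 := by
      intro x y
      rw [Matrix.map_mul, ← Matrix.mul_assoc]
      simp only [Dx, mkDerivation_X, Matrix.mul_apply (M := _ * _), Matrix.map_apply]
      rw [Matrix.mul_apply]
      simp only [map_sum, Derivation.leibniz, mkDerivation_X, derivation_C, genM,
        smul_zero, zero_add, smul_eq_mul, Matrix.map_apply]
      refine Finset.sum_congr rfl fun _ _ => by ring
    rw [Derivation.commutator_apply, key, key, Dx, mkDerivation_X]
    simp only [Matrix.mul_apply, Matrix.map_apply, Matrix.sub_apply, ← Finset.sum_sub_distrib,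
      ← mul_sub, ← C_sub]
  rw [h, Derivation.commutator_apply]

theorem gL_lie {G : Subgroup (GL (Fin n) k)} {x y : Matrix (Fin n) (Fin n) k} (hx : x ∈ gL G)
    (hy : y ∈ gL G) : x * y - y * x ∈ gL G := by
  intro p hp
  have h1 := Dx_mem hx (Dx_mem hy hp) 1 G.one_mem
  have h2 := Dx_mem hy (Dx_mem hx hp) 1 G.one_mem
  have h3 := ev_Dx (1 : Matrix (Fin n) (Fin n) k) (x * y - y * x) p
  rw [map_algebraMap_self, one_mul] at h3
  rw [← h3, Dx_lie, map_sub]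
  simp only [Units.val_one] at h1 h2
  rw [h1, h2, sub_zero]

theorem gL_conj {G : Subgroup (GL (Fin n) k)} {x : Matrix (Fin n) (Fin n) k} (hx : x ∈ gL G)
    {h : GL (Fin n) k} (hh : h ∈ G) :
    (h : Matrix (Fin n) (Fin n) k) * x * ((h⁻¹ : GL (Fin n) k) : Matrix (Fin n) (Fin n) k)
      ∈ gL G := by
  intro p hp
  have := hx _ (tr2_mem_vI hp hh (G.inv_mem hh))
  rw [Td_tr2, map_algebraMap_self, map_algebraMap_self, mul_one, ← Units.val_mul, mul_inv_cancel] at this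
  exact this

end mine

section mine
variable {k : Type*} [Field k] {n : ℕ}

/-- the formal exponential `exp (a X)` -/
def eX [CharZero k] (a : k) : PowerSeries k := PowerSeries.rescale a (PowerSeries.exp k)

theorem eX_add [CharZero k] (a b : k) : eX (a + b) = eX a * eX b :=
  (PowerSeries.exp_mul_exp_eq_exp_add a b).symm

theorem eX_zero [CharZero k] : eX (0 : k) = 1 := by
  simp [eX]

theorem eX_const [CharZero k] (a : k) : PowerSeries.constantCoeff (eX a) = 1 := by
  simp [eX, ← PowerSeries.coeff_zero_eq_constantCoeff, PowerSeries.coeff_rescale]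

theorem eX_deriv [CharZero k] (a : k) :
    PowerSeries.derivative k (eX a) = PowerSeries.C a * eX a := by
  ext m
  rw [PowerSeries.coeff_derivative]
  simp only [eX, PowerSeries.coeff_rescale, PowerSeries.coeff_C_mul, PowerSeries.coeff_exp]
  have : ((m + 1 : ℕ) : k) ≠ 0 := by exact_mod_cast Nat.succ_ne_zero m
  have h2 : ((m.factorial : ℕ) : k) ≠ 0 := by exact_mod_cast Nat.factorial_ne_zero m
  simp only [map_div₀, map_one, map_natCast, Nat.factorial_succ, Nat.cast_mul]
  push_cast at *
  field_simp
  ring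

/-- exponential polynomials are linearly independent -/
theorem exp_indep [CharZero k] (S : Finset k) : ∀ (q : k → Polynomial k),
    ∑ a ∈ S, (q a : PowerSeries k) * eX a = 0 → ∀ a ∈ S, q a = 0 := by
  classical
  induction S using Finset.induction_on with
  | empty => simp
  | insert a S ha ih =>
    -- inner induction on degree of q a
    have step : ∀ N : ℕ, ∀ q : k → Polynomial k, (Polynomial.derivative^[N] (q a) = 0) →
        ∑ b ∈ insert a S, (q b : PowerSeries k) * eX b = 0 → ∀ b ∈ S, q b = 0 := by
      intro N
      induction N with
      | zero =>
        intro q hq h b hb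
        rw [Finset.sum_insert ha] at h
        simp only [Function.iterate_zero, id] at hq
        rw [hq] at h
        simp only [Polynomial.coe_zero, zero_mul, zero_add] at h
        exact ih q h b hb
      | succ N IH =>
        intro q hq h b hb
        let q' : k → Polynomial k := fun b => Polynomial.derivative (q b) + Polynomial.C (b - a) * q b
        have hq' : Polynomial.derivative^[N] (q' a) = 0 := by
          simpa [q'] using hq
        have h' : ∑ b ∈ insert a S, (q' b : PowerSeries k) * eX b = 0 := by
          have h1 := congrArg (PowerSeries.derivative k) h
          have h2 := congrArg (fun z => PowerSeries.C a * z) h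
          simp only [map_sum, map_zero, mul_zero, Finset.mul_sum] at h1 h2
          rw [← sub_eq_zero_of_eq (h1.trans h2.symm), ← Finset.sum_sub_distrib]
          refine Finset.sum_congr rfl fun b _ => ?_
          rw [Derivation.leibniz, eX_deriv]
          simp only [q', Polynomial.coe_add, Polynomial.coe_mul, Polynomial.coe_C,
            smul_eq_mul, PowerSeries.derivative_coe]
          rw [map_sub (PowerSeries.C (R := k))]
          ring
        have h3 := IH q' hq' h' b hb
        -- q b = 0
        by_contra hne
        have hba : b - a ≠ 0 := sub_ne_zero.2 (fun hh => ha (hh ▸ hb))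
        have h4 : (Polynomial.C (b - a) * q b).degree = (q b).degree := by
          rw [Polynomial.degree_C_mul hba]
        have h5 : (Polynomial.derivative (q b)).degree < (q b).degree :=
          Polynomial.degree_derivative_lt hne
        have h6 := Polynomial.degree_add_eq_right_of_degree_lt (h4.symm ▸ h5)
        rw [show Polynomial.derivative (q b) + Polynomial.C (b - a) * q b = 0 from h3, h4] at h6
        exact hne (Polynomial.degree_eq_bot.1 h6.symm)
    intro q h
    have h0 := step ((q a).natDegree + 1) q
      (Polynomial.iterate_derivative_eq_zero (Nat.lt_succ_self _)) h
    intro b hb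
    rcases Finset.mem_insert.1 hb with rfl | hb
    · rw [Finset.sum_insert ha, Finset.sum_eq_zero (fun c hc => by rw [h0 c hc]; simp), add_zero] at h
      rcases mul_eq_zero.1 h with h | h
      · exact_mod_cast h
      · exfalso
        have := eX_const b
        rw [h] at this; simp at this
    · exact h0 b hb

end mine

section mine
variable {k : Type*} [Field k] {n : ℕ}

/-- constant coefficient as an algebra map -/
def ccA : PowerSeries k →ₐ[k] k :=
  { PowerSeries.constantCoeff (R := k) with
    commutes' := by intro r; simp [PowerSeries.algebraMap_apply] }

theorem ccA_apply (f : PowerSeries k) : ccA f = PowerSeries.constantCoeff f := rfl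

theorem map_deriv_mul {R : Type*} [CommRing R] [Algebra k R] (D : Derivation k R R)
    (A B : Matrix (Fin n) (Fin n) R) :
    (A * B).map D = A.map D * B + A * B.map D := by
  ext i j
  simp only [Matrix.map_apply, Matrix.mul_apply, Matrix.add_apply, map_sum, Derivation.leibniz,
    smul_eq_mul, ← Finset.sum_add_distrib]
  exact Finset.sum_congr rfl fun _ _ => by ring

theorem ode_vanish [CharZero k] {G : Subgroup (GL (Fin n) k)} {x : Matrix (Fin n) (Fin n) k}
    (hx : x ∈ gL G) (Y : Matrix (Fin n) (Fin n) (PowerSeries k))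
    (h0 : Y.map (ccA (k := k)) = 1)
    (hY : Y.map (PowerSeries.derivative k) = Y * x.map (algebraMap k (PowerSeries k)))
    {p : MvPolynomial (Fin n × Fin n) k} (hp : p ∈ vI G) : ev Y p = 0 := by
  have key : ∀ j : ℕ, ∀ p ∈ vI G, PowerSeries.coeff j (ev Y p) = 0 := by
    intro j
    induction j with
    | zero =>
      intro p hp
      rw [PowerSeries.coeff_zero_eq_constantCoeff_apply, ← ccA_apply, ev_map, h0]
      simpa using hp 1 G.one_mem
    | succ j ih =>
      intro p hp
      have h1 := ih _ (Dx_mem hx hp)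
      rw [ev_Dx, ← hY, ← deriv_ev, PowerSeries.coeff_derivative] at h1
      rcases mul_eq_zero.1 h1 with h | h
      · exact h
      · exact absurd h (by exact_mod_cast Nat.succ_ne_zero j)
  ext j
  simpa using key j p hp

/-- truncated exponential -/
def nexp (N : Matrix (Fin n) (Fin n) k) (K : ℕ) {R : Type*} [CommRing R] [Algebra k R] (c : R) :
    Matrix (Fin n) (Fin n) R :=
  ∑ m ∈ Finset.range (K + 1), c ^ m • (((m.factorial : k)⁻¹ • N ^ m).map (algebraMap k R))

/-- diagonal conjugate -/
def dexp (Q Q' : Matrix (Fin n) (Fin n) k) {R : Type*} [CommRing R] [Algebra k R]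
    (t : Fin n → R) : Matrix (Fin n) (Fin n) R :=
  Q.map (algebraMap k R) * Matrix.diagonal t * Q'.map (algebraMap k R)

theorem map_am {R R' : Type*} [CommRing R] [Algebra k R] [CommRing R'] [Algebra k R']
    (f : R →ₐ[k] R') (a : Matrix (Fin n) (Fin n) k) :
    (a.map (algebraMap k R)).map f = a.map (algebraMap k R') := by
  ext i j; simp

theorem nexp_map (N : Matrix (Fin n) (Fin n) k) (K : ℕ) {R R' : Type*} [CommRing R] [Algebra k R]
    [CommRing R'] [Algebra k R'] (f : R →ₐ[k] R') (c : R) :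
    (nexp N K c).map f = nexp N K (f c) := by
  ext i j
  simp [nexp, Matrix.sum_apply]

theorem dexp_map (Q Q' : Matrix (Fin n) (Fin n) k) {R R' : Type*} [CommRing R] [Algebra k R]
    [CommRing R'] [Algebra k R'] (f : R →ₐ[k] R') (t : Fin n → R) :
    (dexp Q Q' t).map f = dexp Q Q' (fun i => f (t i)) := by
  rw [dexp, dexp, Matrix.map_mul, Matrix.map_mul, map_am, map_am, Matrix.diagonal_map (map_zero f)]

theorem nexp_zero (N : Matrix (Fin n) (Fin n) k) (K : ℕ) {R : Type*} [CommRing R] [Algebra k R] :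
    nexp N K (0 : R) = 1 := by
  rw [nexp, Finset.sum_eq_single 0]
  · simp
  · intro b _ hb; simp [hb]
  · simp

theorem dexp_one {Q Q' : Matrix (Fin n) (Fin n) k} (hQ : Q * Q' = 1)
    {R : Type*} [CommRing R] [Algebra k R] :
    dexp Q Q' (fun _ => (1 : R)) = 1 := by
  rw [dexp, Matrix.diagonal_one, mul_one, ← Matrix.map_mul, hQ]; simp

theorem nexp_deriv [CharZero k] (N : Matrix (Fin n) (Fin n) k) (K : ℕ) (hN : N ^ (K + 1) = 0) :
    (nexp N K (PowerSeries.X : PowerSeries k)).map (PowerSeries.derivative k)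
      = nexp N K (PowerSeries.X : PowerSeries k) * N.map (algebraMap k (PowerSeries k)) := by
  have h1 : (nexp N K (PowerSeries.X : PowerSeries k)).map (PowerSeries.derivative k)
      = ∑ m ∈ Finset.range (K + 1), (PowerSeries.derivative k (PowerSeries.X ^ m)) •
        (((m.factorial : k)⁻¹ • N ^ m).map (algebraMap k (PowerSeries k))) := by
    refine Matrix.ext fun i j => ?_
    simp only [nexp, Matrix.map_apply, Matrix.sum_apply, Matrix.smul_apply, map_sum,
      smul_eq_mul, Derivation.leibniz, Derivation.map_algebraMap, mul_zero, zero_add]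
    exact Finset.sum_congr rfl fun _ _ => mul_comm _ _
  rw [h1, Finset.sum_range_succ', nexp, Finset.sum_mul, Finset.sum_range_succ]
  have h2 : ((PowerSeries.X : PowerSeries k) ^ K • ((K.factorial : k)⁻¹ • N ^ K).map (algebraMap k (PowerSeries k)))
      * N.map (algebraMap k (PowerSeries k)) = 0 := by
    rw [Matrix.smul_mul, ← Matrix.map_mul, Matrix.smul_mul, ← pow_succ, hN]; simp
  have h3 : (PowerSeries.derivative k) ((PowerSeries.X : PowerSeries k) ^ 0) = 0 := by simp
  rw [h2, h3, zero_smul, add_zero, add_zero]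
  refine Finset.sum_congr rfl fun m _ => ?_
  rw [Matrix.smul_mul, ← Matrix.map_mul, Matrix.smul_mul, ← pow_succ]
  refine Matrix.ext fun i j => ?_
  have h4 : (PowerSeries.derivative k) ((PowerSeries.X : PowerSeries k) ^ (m+1)) =
      (algebraMap k (PowerSeries k)) ((m : k) + 1) * PowerSeries.X ^ m := by
    rw [Derivation.leibniz_pow]
    simp [PowerSeries.derivative_X]
  have h5 : (((m + 1).factorial : k))⁻¹ * (m + 1) = (m.factorial : k)⁻¹ := by
    have : ((m : k) + 1) ≠ 0 := by exact_mod_cast Nat.succ_ne_zero m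
    have h2 : ((m.factorial : ℕ) : k) ≠ 0 := by exact_mod_cast Nat.factorial_ne_zero m
    rw [Nat.factorial_succ]; push_cast; field_simp
  simp only [Matrix.smul_apply, Matrix.map_apply, smul_eq_mul]
  rw [h4, ← h5]
  simp only [map_mul]
  ring

theorem dexp_deriv [CharZero k] {Q Q' : Matrix (Fin n) (Fin n) k} (hQ : Q' * Q = 1)
    (e : Fin n → k) :
    (dexp Q Q' (fun i => eX (e i))).map (PowerSeries.derivative k)
      = dexp Q Q' (fun i => eX (e i)) *
        (dexp Q Q' e).map (algebraMap k (PowerSeries k)) := by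
  have hc : ∀ a : Matrix (Fin n) (Fin n) k,
      (a.map (algebraMap k (PowerSeries k))).map (PowerSeries.derivative k) = 0 := by
    intro a; refine Matrix.ext fun i j => ?_; simp
  have hd : (Matrix.diagonal (fun i => eX (e i))).map (PowerSeries.derivative k) =
      Matrix.diagonal (fun i => eX (e i)) * (Matrix.diagonal e).map (algebraMap k (PowerSeries k)) := by
    rw [Matrix.diagonal_map (map_zero _), Matrix.diagonal_map (map_zero _), Matrix.diagonal_mul_diagonal]
    congr 1
    ext1 i
    simp only [Function.comp, eX_deriv]
    rw [mul_comm]; rfl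
  simp only [dexp]
  rw [map_deriv_mul, map_deriv_mul, hc, hc, hd]
  simp only [map_algebraMap_self, Matrix.map_mul]
  have h6 : Q'.map (algebraMap k (PowerSeries k)) * Q.map (algebraMap k (PowerSeries k)) = 1 := by
    rw [← Matrix.map_mul, hQ]; simp
  rw [Matrix.zero_mul, zero_add, mul_zero, add_zero]
  simp only [Matrix.mul_assoc]
  rw [← Matrix.mul_assoc (Q'.map _) (Q.map _), h6, one_mul]

/-- the replica lemma -/
theorem replica [CharZero k] {G : Subgroup (GL (Fin n) k)} {Q Q' N : Matrix (Fin n) (Fin n) k}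
    (hQ : Q * Q' = 1) {Λ : Type*} [AddCommGroup Λ] (ι : Λ →+ k) (hι : Function.Injective ι)
    (d : Fin n → Λ) (K : ℕ) (hN : N ^ (K + 1) = 0)
    (hcomm : Commute (dexp Q Q' (fun i => ι (d i))) N)
    (hx : dexp Q Q' (fun i => ι (d i)) + N ∈ gL G)
    {R : Type*} [CommRing R] [Algebra k R] (ψ : Multiplicative Λ →* R) (c : R)
    {p : MvPolynomial (Fin n × Fin n) k} (hp : p ∈ vI G) :
    ev (dexp Q Q' (fun i => ψ (.ofAdd (d i))) * nexp N K c) p = 0 := by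
  classical
  let g : Multiplicative Λ →* PowerSeries k :=
    { toFun := fun l => eX (ι l.toAdd)
      map_one' := by simp [eX_zero]
      map_mul' := by intro a b; simp [eX_add] }
  let cA : Polynomial k →ₐ[k] PowerSeries k := Polynomial.coeToPowerSeries.algHom k
  let Φ : AddMonoidAlgebra (Polynomial k) Λ →ₐ[k] PowerSeries k :=
    AddMonoidAlgebra.liftNCAlgHom cA g (fun _ _ => Commute.all _ _)
  let Ψ : AddMonoidAlgebra (Polynomial k) Λ →ₐ[k] R :=
    AddMonoidAlgebra.liftNCAlgHom (Polynomial.aeval c) ψ (fun _ _ => Commute.all _ _)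
  have hcA : ∀ q, cA q = (q : PowerSeries k) := by intro q; simp [cA, Polynomial.coeToPowerSeries.algHom_apply]
  have hinj : Function.Injective Φ := by
    rw [injective_iff_map_eq_zero]
    intro f hf
    have h1 : Φ f = ∑ l ∈ f.coeff.support, ((f.coeff l : Polynomial k) : PowerSeries k) * eX (ι l) := by
      conv_lhs => rw [← AddMonoidAlgebra.sum_coeff_single f]
      rw [Finsupp.sum, map_sum]
      refine Finset.sum_congr rfl fun l _ => ?_
      simp [Φ, hcA, g]
    rw [h1] at hf
    let q : k → Polynomial k := fun a => f.coeff (Function.invFun ι a)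
    have hq : ∀ l, q (ι l) = f.coeff l := fun l => by
      simp [q, Function.leftInverse_invFun hι l]
    have h2 : ∑ a ∈ f.coeff.support.image ι, (q a : PowerSeries k) * eX a = 0 := by
      rw [Finset.sum_image (fun a _ b _ h => hι h), ← hf]
      simp only [hq]
    have h3 := exp_indep _ q h2
    ext l : 2
    by_contra hl
    apply hl
    rw [← hq]
    exact h3 _ (Finset.mem_image_of_mem _ (Finsupp.mem_support_iff.2 hl))
  let E : Matrix (Fin n) (Fin n) (AddMonoidAlgebra (Polynomial k) Λ) :=
    dexp Q Q' (fun i => AddMonoidAlgebra.single (d i) 1) *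
      nexp N K (AddMonoidAlgebra.single (0 : Λ) (Polynomial.X : Polynomial k))
  have hΦ : E.map Φ = dexp Q Q' (fun i => eX (ι (d i))) * nexp N K (PowerSeries.X) := by
    simp only [E]
    rw [Matrix.map_mul, dexp_map, nexp_map]
    simp [Φ, hcA, g, eX_zero]
  have hΨ : E.map Ψ = dexp Q Q' (fun i => ψ (.ofAdd (d i))) * nexp N K c := by
    simp only [E]
    rw [Matrix.map_mul, dexp_map, nexp_map]
    simp [Ψ]
  rw [← hΨ, ← ev_map]
  suffices h : ev E p = 0 by rw [h, map_zero]
  apply hinj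
  rw [map_zero, ev_map, hΦ]
  have hQ' : Q' * Q = 1 := mul_eq_one_comm.1 hQ
  refine ode_vanish hx _ ?_ ?_ hp
  · rw [Matrix.map_mul, dexp_map, nexp_map]
    simp only [ccA_apply, eX_const, PowerSeries.constantCoeff_X]
    rw [dexp_one hQ, nexp_zero, one_mul]
  · rw [map_deriv_mul, dexp_deriv hQ', nexp_deriv N K hN]
    have hc : Commute ((dexp Q Q' (fun i => ι (d i))).map (algebraMap k (PowerSeries k)))
        (nexp N K (PowerSeries.X : PowerSeries k)) := by
      refine Commute.sum_right _ _ _ fun m _ => Commute.smul_right ?_ _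
      rw [Commute, SemiconjBy, ← Matrix.map_mul, ← Matrix.map_mul]
      congr 1
      exact ((hcomm.pow_right m).smul_right _)
    have hadd : (dexp Q Q' (fun i => ι (d i)) + N).map (algebraMap k (PowerSeries k)) =
      (dexp Q Q' (fun i => ι (d i))).map (algebraMap k (PowerSeries k)) + N.map (algebraMap k (PowerSeries k)) := by
      refine Matrix.ext fun i j => ?_; simp
    rw [hadd, mul_add, mul_assoc, hc.eq]
    simp only [mul_assoc]

end mine

section mine
variable {k : Type*} [Field k] {n : ℕ}

theorem zTop_nhd {σ : Type*} {u : Set (σ → k)} (hu : @IsOpen _ (zTop k σ) u) {x : σ → k}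
    (hx : x ∈ u) : ∃ p : MvPolynomial σ k, eval x p ≠ 0 ∧ {y | eval y p ≠ 0} ⊆ u := by
  let _ := zTop k σ
  have hb := TopologicalSpace.isTopologicalBasis_of_subbasis_of_inter
    (r := {U | ∃ p : MvPolynomial σ k, U = {x | MvPolynomial.eval x p ≠ 0}}) (t := zTop k σ) rfl
    (by
      rintro _ ⟨p, rfl⟩ _ ⟨q, rfl⟩
      refine ⟨p * q, ?_⟩
      ext y; simp)
  obtain ⟨v, hv, hxv, hvu⟩ := hb.exists_subset_of_mem_open hx hu
  rcases hv with rfl | ⟨p, rfl⟩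
  · exact ⟨1, by simp, fun y _ => hvu trivial⟩
  · exact ⟨p, hxv, hvu⟩

theorem ev_eq_eval (g : Matrix (Fin n) (Fin n) k) (p : MvPolynomial (Fin n × Fin n) k) :
    ev g p = eval (fun ij : Fin n × Fin n => g ij.1 ij.2) p := by
  rfl

theorem glTop_nhd {u : Set (GL (Fin n) k)} (hu : @IsOpen _ (glTop k n) u) {x : GL (Fin n) k}
    (hx : x ∈ u) : ∃ p : MvPolynomial (Fin n × Fin n) k, ev (x : Matrix (Fin n) (Fin n) k) p ≠ 0 ∧
      {y : GL (Fin n) k | ev (y : Matrix (Fin n) (Fin n) k) p ≠ 0} ⊆ u := by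
  obtain ⟨v, hv, rfl⟩ := hu
  obtain ⟨w, hw, rfl⟩ := hv
  obtain ⟨p, hp, hpw⟩ := zTop_nhd hw hx
  refine ⟨p, by rwa [ev_eq_eval], fun y hy => hpw ?_⟩
  have hy' : ev (y : Matrix (Fin n) (Fin n) k) p ≠ 0 := hy
  rwa [ev_eq_eval] at hy'

theorem glTop_D (p : MvPolynomial (Fin n × Fin n) k) :
    @IsOpen _ (glTop k n) {y : GL (Fin n) k | ev (y : Matrix (Fin n) (Fin n) k) p ≠ 0} := by
  refine ⟨{M | ev M p ≠ 0}, ⟨{x | eval x p ≠ 0}, TopologicalSpace.isOpen_generateFrom_of_mem ⟨p, rfl⟩, ?_⟩, rfl⟩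
  ext M; simp [ev_eq_eval]

theorem glTop_V (T : Set (MvPolynomial (Fin n × Fin n) k)) :
    @IsClosed _ (glTop k n) {y : GL (Fin n) k | ∀ p ∈ T, ev (y : Matrix (Fin n) (Fin n) k) p = 0} := by
  let _ := glTop k n
  have : {y : GL (Fin n) k | ∀ p ∈ T, ev (y : Matrix (Fin n) (Fin n) k) p = 0} =
    ⋂ p ∈ T, {y : GL (Fin n) k | ev (y : Matrix (Fin n) (Fin n) k) p ≠ 0}ᶜ := by
    ext y; simp
  rw [this]
  exact isClosed_biInter fun p _ => (glTop_D p).isClosed_compl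

theorem closed_mem {G : Subgroup (GL (Fin n) k)} (hcl : IsAlgSubgroup k G) {g : GL (Fin n) k}
    (hg : ∀ p ∈ vI G, ev (g : Matrix (Fin n) (Fin n) k) p = 0) : g ∈ G := by
  by_contra h
  obtain ⟨p, hp, hpu⟩ := glTop_nhd hcl.isOpen_compl (x := g) h
  apply hp
  apply hg
  intro h hh
  by_contra hne
  exact hpu hne hh

theorem preconn_of {Z : Set (GL (Fin n) k)}
    (h : ∀ p q : MvPolynomial (Fin n × Fin n) k,
      (∃ g ∈ Z, ev (g : Matrix (Fin n) (Fin n) k) p ≠ 0) →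
      (∃ g ∈ Z, ev (g : Matrix (Fin n) (Fin n) k) q ≠ 0) →
      ∃ g ∈ Z, ev (g : Matrix (Fin n) (Fin n) k) p ≠ 0 ∧ ev (g : Matrix (Fin n) (Fin n) k) q ≠ 0) :
    @IsPreconnected _ (glTop k n) Z := by
  let _ := glTop k n
  rintro u v hu hv - ⟨x, hxZ, hxu⟩ ⟨y, hyZ, hyv⟩
  obtain ⟨p, hp, hpu⟩ := glTop_nhd hu hxu
  obtain ⟨q, hq, hqv⟩ := glTop_nhd hv hyv
  obtain ⟨g, hg, h1, h2⟩ := h p q ⟨x, hxZ, hp⟩ ⟨y, hyZ, hq⟩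
  exact ⟨g, hg, hpu h1, hqv h2⟩

theorem cont_tr (a b : GL (Fin n) k) :
    @Continuous _ _ (glTop k n) (glTop k n) (fun h => a * h * b) := by
  let _ := glTop k n
  refine ⟨fun u hu => ?_⟩
  rw [isOpen_iff_forall_mem_open]
  intro x hx
  obtain ⟨p, hp, hpu⟩ := glTop_nhd hu hx
  have key : ∀ y : GL (Fin n) k, ev (y : Matrix (Fin n) (Fin n) k)
      (tr2 (a : Matrix (Fin n) (Fin n) k) (b : Matrix (Fin n) (Fin n) k) p) =
      ev ((a * y * b : GL (Fin n) k) : Matrix (Fin n) (Fin n) k) p := by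
    intro y
    rw [ev_tr2, map_algebraMap_self, map_algebraMap_self]; simp
  refine ⟨_, ?_, glTop_D (tr2 (a : Matrix (Fin n) (Fin n) k) (b : Matrix (Fin n) (Fin n) k) p), ?_⟩
  · intro y hy
    apply hpu
    simpa [key] using hy
  · simpa [key] using hp

/-- identity component argument -/
theorem comp_trivial {G : Subgroup (GL (Fin n) k)} (hss : IsSemisimpleSub k G)
    (H : Subgroup (GL (Fin n) k)) (hHG : H ≤ G)
    (hnorm : ∀ g ∈ G, ∀ h ∈ H, g * h * g⁻¹ ∈ H)
    (hab : ∀ a ∈ H, ∀ b ∈ H, a * b = b * a)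
    (hcl : @IsClosed _ (glTop k n) (H : Set (GL (Fin n) k)))
    (Z : Set (GL (Fin n) k)) (hZ : @IsPreconnected _ (glTop k n) Z) (hZH : Z ⊆ H) (h1 : 1 ∈ Z) :
    ∀ z ∈ Z, z = 1 := by
  let _ := glTop k n
  set C := connectedComponentIn (H : Set (GL (Fin n) k)) 1 with hC
  have hCH : C ⊆ H := connectedComponentIn_subset _ _
  have hCp : IsPreconnected C := isPreconnected_connectedComponentIn
  have h1C : (1 : GL (Fin n) k) ∈ C := mem_connectedComponentIn H.one_mem
  have hsub : ∀ a b : GL (Fin n) k, (∀ h ∈ H, a * h * b ∈ H) → ∀ c ∈ C, a * c * b ∈ C →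
      ∀ h ∈ C, a * h * b ∈ C := by
    intro a b hab c hc hacb h hh
    have hp : IsPreconnected ((fun h => a * h * b) '' C) := hCp.image _ (cont_tr a b).continuousOn
    have h2 := hp.subset_connectedComponentIn (x := a * c * b) ⟨c, hc, rfl⟩ (F := (H : Set (GL (Fin n) k)))
      (by rintro _ ⟨y, hy, rfl⟩; exact hab y (hCH hy))
    rw [← connectedComponentIn_eq hacb] at h2
    exact h2 ⟨h, hh, rfl⟩
  let H0 : Subgroup (GL (Fin n) k) :=
    { carrier := C
      one_mem' := h1C
      mul_mem' := by
        intro a b ha hb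
        have := hsub a 1 (fun h hh => by simpa using H.mul_mem (hCH ha) hh) 1 h1C (by simpa using ha) b hb
        simpa using this
      inv_mem' := by
        intro a ha
        have := hsub a⁻¹ 1 (fun h hh => by simpa using H.mul_mem (H.inv_mem (hCH ha)) hh) a ha (by simpa using h1C) 1 h1C
        simpa using this }
  have hb : H0 = ⊥ := by
    refine hss H0 (fun x hx => hHG (hCH hx)) ?_ ?_ ?_ ⟨⟨1, h1C⟩, hCp⟩
    · refine ⟨fun x hx g => ?_⟩
      rw [Subgroup.mem_subgroupOf] at hx ⊢
      exact hsub g (g⁻¹ : G) (fun h hh => hnorm g g.2 h hh) 1 h1C (by simpa using h1C) x hx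
    · apply Group.isSolvable_of_comm
      intro a b
      ext1
      exact hab _ (hCH a.2) _ (hCH b.2)
    · have h2 : closure C ⊆ C :=
        hCp.closure.subset_connectedComponentIn (subset_closure h1C) (closure_minimal hCH hcl)
      exact closure_subset_iff_isClosed.1 h2
  intro z hz
  have : z ∈ H0 := hZ.subset_connectedComponentIn h1 hZH hz
  rw [hb] at this
  simpa using this

/-- a connected group has prime vanishing ideal -/
theorem vI_prime {G : Subgroup (GL (Fin n) k)} (hconn : IsConnectedSub k G) : (vI G).IsPrime := by
  let _ := glTop k n
  have hne : vI G ≠ ⊤ := by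
    rw [Ideal.ne_top_iff_one]
    intro h
    have := h 1 G.one_mem
    simp at this
  have hnt : Nontrivial (MvPolynomial (Fin n × Fin n) k ⧸ vI G) := Ideal.Quotient.nontrivial_iff.2 hne
  obtain ⟨P, hP⟩ := associatedPrimes.nonempty (MvPolynomial (Fin n × Fin n) k)
    (MvPolynomial (Fin n × Fin n) k ⧸ vI G)
  rw [AssociatedPrimes.mem_iff, isAssociatedPrime_iff] at hP
  obtain ⟨hPp, x, hx⟩ := hP
  obtain ⟨p, rfl⟩ := Ideal.Quotient.mk_surjective x
  have hmem : ∀ a, a ∈ P ↔ a * p ∈ vI G := by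
    intro a
    rw [hx, Submodule.mem_colon_singleton, Submodule.mem_bot, ← Ideal.Quotient.eq_zero_iff_mem, map_mul]
    rfl
  have hpI : p ∉ vI G := by
    intro h
    apply hPp.ne_top
    rw [Ideal.eq_top_iff_one, hmem, one_mul]; exact h
  have hcol : ∀ a b, a * b * p ∈ vI G → a * p ∈ vI G ∨ b * p ∈ vI G := by
    intro a b h
    rw [← hmem, ← hmem]
    exact hPp.mem_or_mem ((hmem _).2 h)
  obtain ⟨g0, hg0, hpg0⟩ : ∃ g ∈ G, ev (g : Matrix (Fin n) (Fin n) k) p ≠ 0 := by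
    by_contra hcon
    push Not at hcon
    exact hpI hcon
  -- translates
  let T : GL (Fin n) k → MvPolynomial (Fin n × Fin n) k → MvPolynomial (Fin n × Fin n) k :=
    fun g q => tr2 ((g0 * g⁻¹ : GL (Fin n) k) : Matrix (Fin n) (Fin n) k)
      ((1 : GL (Fin n) k) : Matrix (Fin n) (Fin n) k) q
  have evT : ∀ (g h : GL (Fin n) k) q, ev (h : Matrix (Fin n) (Fin n) k) (T g q) =
      ev ((g0 * g⁻¹ * h : GL (Fin n) k) : Matrix (Fin n) (Fin n) k) q := by
    intro g h q
    simp only [T]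
    rw [ev_tr2, map_algebraMap_self, map_algebraMap_self]; simp
  have hTcol : ∀ g ∈ G, ∀ a b, a * b * T g p ∈ vI G → a * T g p ∈ vI G ∨ b * T g p ∈ vI G := by
    intro g hg a b hab
    -- translate back
    let a' := tr2 ((g * g0⁻¹ : GL (Fin n) k) : Matrix (Fin n) (Fin n) k)
      ((1 : GL (Fin n) k) : Matrix (Fin n) (Fin n) k) a
    let b' := tr2 ((g * g0⁻¹ : GL (Fin n) k) : Matrix (Fin n) (Fin n) k)
      ((1 : GL (Fin n) k) : Matrix (Fin n) (Fin n) k) b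
    have evb : ∀ (h : GL (Fin n) k) q, ev (h : Matrix (Fin n) (Fin n) k)
      (tr2 ((g * g0⁻¹ : GL (Fin n) k) : Matrix (Fin n) (Fin n) k)
      ((1 : GL (Fin n) k) : Matrix (Fin n) (Fin n) k) q) =
      ev ((g * g0⁻¹ * h : GL (Fin n) k) : Matrix (Fin n) (Fin n) k) q := by
      intro h q
      rw [ev_tr2, map_algebraMap_self, map_algebraMap_self]; simp
    have h1 : a' * b' * p ∈ vI G := by
      intro h hh
      have := hab (g * g0⁻¹ * h) (G.mul_mem (G.mul_mem hg (G.inv_mem hg0)) hh)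
      rw [map_mul, map_mul, evT] at this
      rw [map_mul, map_mul, evb, evb]
      convert this using 4
      group
    have back : ∀ c, tr2 ((g * g0⁻¹ : GL (Fin n) k) : Matrix (Fin n) (Fin n) k)
      ((1 : GL (Fin n) k) : Matrix (Fin n) (Fin n) k) c * p ∈ vI G → c * T g p ∈ vI G := by
      intro c hc h hh
      have := hc (g0 * g⁻¹ * h) (G.mul_mem (G.mul_mem hg0 (G.inv_mem hg)) hh)
      rw [map_mul, evb] at this
      rw [map_mul, evT]
      convert this using 4
      group
    exact (hcol _ _ h1).imp (back a) (back b)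
  suffices hPI : P ≤ vI G by
    have : P = vI G := le_antisymm hPI (fun a ha => (hmem a).2 (Ideal.mul_mem_right _ _ ha))
    exact this ▸ hPp
  intro a ha g1 hg1
  by_contra hne1
  let Z : Set (GL (Fin n) k) := {g | g ∈ G ∧ ∀ a ∈ P, ev (g : Matrix (Fin n) (Fin n) k) a = 0}
  have hZD : ∀ g ∈ Z, ∀ h ∈ G, ev (h : Matrix (Fin n) (Fin n) k) (T g p) ≠ 0 → h ∈ Z := by
    rintro g ⟨hg, hgP⟩ h hh hne2
    refine ⟨hh, fun a ha => ?_⟩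
    have hgg : ev (g : Matrix (Fin n) (Fin n) k) (T g p) ≠ 0 := by rw [evT]; simpa using hpg0
    have h3 : a * p * T g p ∈ vI G := Ideal.mul_mem_right _ _ ((hmem a).1 ha)
    rcases hTcol g hg _ _ h3 with h4 | h4
    · have := h4 h hh
      rw [map_mul] at this
      exact (mul_eq_zero.1 this).resolve_right hne2
    · exact absurd (hgP (T g p) ((hmem _).2 (by rwa [mul_comm]))) hgg
  let u : Set (GL (Fin n) k) := ⋃ g ∈ Z, {h | ev (h : Matrix (Fin n) (Fin n) k) (T g p) ≠ 0}
  let v : Set (GL (Fin n) k) := ⋃ a ∈ P, {h | ev (h : Matrix (Fin n) (Fin n) k) a ≠ 0}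
  have hu : IsOpen u := isOpen_biUnion fun g _ => glTop_D _
  have hv : IsOpen v := isOpen_biUnion fun g _ => glTop_D _
  have huv : (G : Set (GL (Fin n) k)) ⊆ u ∪ v := by
    intro g hg
    by_cases hgv : g ∈ v
    · exact Or.inr hgv
    · left
      simp only [v, Set.mem_iUnion, not_exists, Set.mem_ofPred_eq, not_not] at hgv
      simp only [u, Set.mem_iUnion]
      refine ⟨g, ⟨hg, fun a ha => hgv a ha⟩, ?_⟩
      rw [Set.mem_ofPred_eq, evT]; simpa using hpg0
  have hg0u : g0 ∈ u := by
    simp only [u, Set.mem_iUnion]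
    refine ⟨g0, ⟨hg0, fun a ha => ?_⟩, ?_⟩
    · have := (hmem a).1 ha g0 hg0
      rw [map_mul] at this
      exact (mul_eq_zero.1 this).resolve_right hpg0
    · rw [Set.mem_ofPred_eq, evT]; simpa using hpg0
  have hg1v : g1 ∈ v := by
    simp only [v, Set.mem_iUnion]
    exact ⟨a, ha, hne1⟩
  obtain ⟨y, hyG, hyu, hyv⟩ := hconn.2 u v hu hv huv ⟨g0, hg0, hg0u⟩ ⟨g1, hg1, hg1v⟩
  simp only [u, v, Set.mem_iUnion] at hyu hyv
  obtain ⟨g, hgZ, hy⟩ := hyu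
  obtain ⟨b, hb, hyb⟩ := hyv
  exact hyb ((hZD g hgZ y hyG hy).2 b hb)

end mine

section mine
variable {k : Type*} [Field k] {n : ℕ}

theorem dexp_mul {Q Q' : Matrix (Fin n) (Fin n) k} (hQ : Q' * Q = 1) {R : Type*} [CommRing R]
    [Algebra k R] (s t : Fin n → R) :
    dexp Q Q' s * dexp Q Q' t = dexp Q Q' (fun i => s i * t i) := by
  have h6 : Q'.map (algebraMap k R) * Q.map (algebraMap k R) = 1 := by
    rw [← Matrix.map_mul, hQ]; simp
  simp only [dexp]
  rw [← Matrix.diagonal_mul_diagonal]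
  simp only [Matrix.mul_assoc]
  rw [← Matrix.mul_assoc (Q'.map _) (Q.map _), h6, one_mul]

theorem jordan [IsAlgClosed k] [CharZero k] (x : Matrix (Fin n) (Fin n) k) :
    ∃ (Q Q' N : Matrix (Fin n) (Fin n) k) (e : Fin n → k) (K : ℕ), Q * Q' = 1 ∧ N ^ (K + 1) = 0 ∧
      Commute (dexp Q Q' e) N ∧ x = dexp Q Q' e + N ∧
      (∀ h, Commute h x → Commute h (dexp Q Q' e) ∧ Commute h N) := by
  obtain ⟨nn, hn, s, hs, hnil, hss, hf⟩ := Module.End.exists_isNilpotent_isSemisimple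
    (f := Matrix.toLinAlgEquiv' x)
  have htop := hss.iSup_eigenspace_eq_top
  let V : Set (Fin n → k) := {v | ∃ μ : k, s v = μ • v}
  have hV : ⊤ ≤ Submodule.span k V := by
    rw [← htop]
    refine iSup_le fun μ v hv => Submodule.subset_span ⟨μ, Module.End.mem_eigenspace_iff.1 hv⟩
  let b0 := Module.Basis.ofSpan hV
  let b : Module.Basis (Fin n) k (Fin n → k) := b0.reindex (b0.indexEquiv (Pi.basisFun k (Fin n)))
  have hb : ∀ i, ∃ μ : k, s (b i) = μ • b i := by
    intro i
    have : b i ∈ V := by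
      apply Module.Basis.ofSpan_subset hV
      rw [Module.Basis.reindex_apply]
      exact ⟨_, rfl⟩
    exact this
  choose e he using hb
  let Q := (Pi.basisFun k (Fin n)).toMatrix b
  let Q' := b.toMatrix (Pi.basisFun k (Fin n))
  have hQ : Q * Q' = 1 := Module.Basis.toMatrix_mul_toMatrix_flip _ _
  let S := Matrix.toLinAlgEquiv'.symm s
  let N := Matrix.toLinAlgEquiv'.symm nn
  have hSs : Matrix.toLinAlgEquiv' S = s := AlgEquiv.apply_symm_apply _ _
  have hNn : Matrix.toLinAlgEquiv' N = nn := AlgEquiv.apply_symm_apply _ _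
  have hS : S = dexp Q Q' e := by
    have h1 : S * Q = Q * Matrix.diagonal e := by
      ext i j
      rw [Matrix.mul_diagonal]
      have h2 := congrFun (he j) i
      rw [← hSs, Matrix.toLinAlgEquiv'_apply] at h2
      simpa [Q, Module.Basis.toMatrix_apply, Matrix.mulVec, dotProduct, Matrix.mul_apply, mul_comm] using h2
    rw [dexp, map_algebraMap_self, map_algebraMap_self, ← h1, mul_assoc, hQ, mul_one]
  have hcom : ∀ (c : Module.End k (Fin n → k)) (h : Matrix (Fin n) (Fin n) k),
      c ∈ Algebra.adjoin k {Matrix.toLinAlgEquiv' x} → Commute h x →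
      Commute h (Matrix.toLinAlgEquiv'.symm c) := by
    intro c h hc hh
    have h1 : Commute (Matrix.toLinAlgEquiv' h) c :=
      Algebra.commute_of_mem_adjoin_singleton_of_commute hc (hh.map Matrix.toLinAlgEquiv')
    simpa using h1.map Matrix.toLinAlgEquiv'.symm
  have hx : x = S + N := by
    apply Matrix.toLinAlgEquiv'.injective
    rw [map_add, hSs, hNn, hf, add_comm]
  obtain ⟨K, hK⟩ := hnil
  refine ⟨Q, Q', N, e, K, hQ, ?_, ?_, ?_, ?_⟩
  · apply Matrix.toLinAlgEquiv'.injective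
    rw [map_pow, hNn, pow_succ, hK, zero_mul, map_zero]
  · rw [← hS]
    exact hcom nn S hn (hcom s x hs (Commute.refl x)).symm
  · rw [← hS]; exact hx
  · intro h hh
    rw [← hS]
    exact ⟨hcom s h hs hh, hcom nn h hn hh⟩

theorem exists_int_functional [CharZero k] {ι : Type*} [Finite ι] (e : ι → k)
    (y : Submodule.span ℤ (Set.range e)) (hy : y ≠ 0) :
    ∃ φ : Submodule.span ℤ (Set.range e) →+ ℤ, φ y ≠ 0 := by
  have hfin : Module.Finite ℤ (Submodule.span ℤ (Set.range e)) :=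
    Module.Finite.span_of_finite ℤ (Set.finite_range e)
  have hfree : Module.Free ℤ (Submodule.span ℤ (Set.range e)) := inferInstance
  by_contra hcon
  push Not at hcon
  apply hy
  apply (Module.Free.chooseBasis ℤ (Submodule.span ℤ (Set.range e))).ext_elem
  intro i
  have := hcon ((Module.Free.chooseBasis ℤ (Submodule.span ℤ (Set.range e))).coord i).toAddMonoidHom
  simpa using this

theorem dexp_comm {Q Q' : Matrix (Fin n) (Fin n) k} (hQ : Q * Q' = 1) (e f : Fin n → k)
    (hef : ∀ i j, e i = e j → f i = f j) (h : Matrix (Fin n) (Fin n) k)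
    (hh : Commute h (dexp Q Q' e)) : Commute h (dexp Q Q' f) := by
  have hQ' : Q' * Q = 1 := mul_eq_one_comm.1 hQ
  simp only [dexp, map_algebraMap_self] at *
  have conj : ∀ D : Matrix (Fin n) (Fin n) k, Commute h (Q * D * Q') ↔ Commute (Q' * h * Q) D := by
    intro D
    constructor
    · intro hc
      have h1 := congrArg (fun z => Q' * z * Q) hc.eq
      calc Q' * h * Q * D = Q' * (h * (Q * D * Q')) * Q := by
            simp only [mul_assoc]; rw [hQ', mul_one]
        _ = Q' * (Q * D * Q' * h) * Q := h1
        _ = D * (Q' * h * Q) := by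
            simp only [← mul_assoc]; rw [hQ', one_mul]
    · intro hc
      have h1 := congrArg (fun z => Q * z * Q') hc.eq
      calc h * (Q * D * Q') = Q * (Q' * h * Q * D) * Q' := by
            simp only [← mul_assoc]; rw [hQ, one_mul]
        _ = Q * (D * (Q' * h * Q)) * Q' := h1
        _ = Q * D * Q' * h := by
            simp only [mul_assoc]; rw [hQ, mul_one]
  rw [conj] at hh ⊢
  ext i j
  have h2 := congrFun (congrFun hh.eq i) j
  rw [Matrix.mul_diagonal, Matrix.diagonal_mul] at h2 ⊢
  by_cases hz : (Q' * h * Q) i j = 0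
  · simp [hz]
  · rw [mul_comm] at h2
    have := mul_right_cancel₀ hz h2
    rw [hef i j this.symm, mul_comm]

/-- replicas lie in the Lie algebra -/
theorem replica_lie [CharZero k] {G : Subgroup (GL (Fin n) k)} {Q Q' N : Matrix (Fin n) (Fin n) k}
    (hQ : Q * Q' = 1) {Λ : Type*} [AddCommGroup Λ] (ι : Λ →+ k) (hι : Function.Injective ι)
    (d : Fin n → Λ) (K : ℕ) (hN : N ^ (K + 1) = 0)
    (hcomm : Commute (dexp Q Q' (fun i => ι (d i))) N)
    (hx : dexp Q Q' (fun i => ι (d i)) + N ∈ gL G) (φ : Λ →+ ℤ) :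
    dexp Q Q' (fun i => (φ (d i) : k)) ∈ gL G := by
  intro p hp
  let g : Multiplicative Λ →* PowerSeries k :=
    { toFun := fun l => eX (φ l.toAdd : k)
      map_one' := by simp [eX_zero]
      map_mul' := by intro a b; simp [eX_add] }
  have h1 := replica hQ ι hι d K hN hcomm hx g 0 hp
  rw [nexp_zero, mul_one] at h1
  have h2 := congrArg (PowerSeries.derivative k) h1
  have hg : (fun i => g (.ofAdd (d i))) = fun i => eX (φ (d i) : k) := rfl
  rw [deriv_ev, map_zero, hg, dexp_deriv (mul_eq_one_comm.1 hQ)] at h2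
  have h3 := congrArg (ccA (k := k)) h2
  rw [Td_map, map_zero, Matrix.map_mul, dexp_map, map_am] at h3
  simp only [ccA_apply, eX_const] at h3
  rw [dexp_one hQ, one_mul, map_algebraMap_self] at h3
  exact h3

end mine

section mine
variable {k : Type*} [Field k] {n : ℕ}

theorem closed_comm (M : Matrix (Fin n) (Fin n) k) :
    @IsClosed _ (glTop k n) {h : GL (Fin n) k | Commute (h : Matrix (Fin n) (Fin n) k) M} := by
  have := glTop_V (Set.range fun ij : Fin n × Fin n =>
    (genM k n * M.map C - M.map C * genM k n : Matrix (Fin n) (Fin n) (MvPolynomial (Fin n × Fin n) k)) ij.1 ij.2)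
  convert this using 1
  ext h
  have key : ∀ i j, ev (h : Matrix (Fin n) (Fin n) k)
      ((genM k n * M.map C - M.map C * genM k n : Matrix (Fin n) (Fin n) (MvPolynomial (Fin n × Fin n) k)) i j)
      = ((h : Matrix (Fin n) (Fin n) k) * M - M * h) i j := by
    intro i j
    have h2 : (M.map C).map (ev (h : Matrix (Fin n) (Fin n) k)) = M := by
      ext i j; simp [ev]
    have h1 : (genM k n * M.map C - M.map C * genM k n : Matrix (Fin n) (Fin n) (MvPolynomial (Fin n × Fin n) k)).map
        (ev (h : Matrix (Fin n) (Fin n) k)) = (h : Matrix (Fin n) (Fin n) k) * M - M * h := by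
      rw [Matrix.map_sub _ (by simp), Matrix.map_mul, Matrix.map_mul, h2, genmat_map]
    rw [← h1]; rfl
  rw [Set.mem_ofPred_eq, Set.mem_ofPred_eq, Set.forall_mem_range, Commute, SemiconjBy, ← sub_eq_zero]
  constructor
  · intro h0 ij; rw [key, h0]; rfl
  · intro h0; ext i j; rw [← key]; exact h0 (i, j)

theorem lemM1 {G : Subgroup (GL (Fin n) k)} (hcl : IsAlgSubgroup k G) (hss : IsSemisimpleSub k G)
    (a : Set (Matrix (Fin n) (Fin n) k))
    (hAd : ∀ h ∈ G, ∀ x ∈ a, (h : Matrix (Fin n) (Fin n) k) * x * ((h⁻¹ : GL (Fin n) k) : Matrix (Fin n) (Fin n) k) ∈ a)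
    (hab : ∀ x ∈ a, ∀ y ∈ a, Commute x y) (x : Matrix (Fin n) (Fin n) k) (hxa : x ∈ a)
    (Z : Set (GL (Fin n) k)) (hZ : @IsPreconnected _ (glTop k n) Z) (h1 : 1 ∈ Z)
    (hZG : Z ⊆ G) (hZx : ∀ z ∈ Z, ∀ h : Matrix (Fin n) (Fin n) k, Commute h x → Commute h z) :
    ∀ z ∈ Z, z = 1 := by
  let _ := glTop k n
  let H : Subgroup (GL (Fin n) k) :=
    { carrier := {h | h ∈ G ∧ (∀ y ∈ a, Commute (h : Matrix (Fin n) (Fin n) k) y) ∧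
        ∀ c ∈ G, (∀ y ∈ a, Commute (c : Matrix (Fin n) (Fin n) k) y) →
          Commute (h : Matrix (Fin n) (Fin n) k) c}
      one_mem' := ⟨G.one_mem, fun y _ => by simp, fun c _ _ => by simp⟩
      mul_mem' := by
        rintro b c ⟨hb1, hb2, hb3⟩ ⟨hc1, hc2, hc3⟩
        refine ⟨G.mul_mem hb1 hc1, fun y hy => ?_, fun g hg hgy => ?_⟩
        · rw [Units.val_mul]; exact (hb2 y hy).mul_left (hc2 y hy)
        · rw [Units.val_mul]; exact (hb3 g hg hgy).mul_left (hc3 g hg hgy)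
      inv_mem' := by
        rintro b ⟨hb1, hb2, hb3⟩
        exact ⟨G.inv_mem hb1, fun y hy => (hb2 y hy).units_inv_left,
          fun g hg hgy => (hb3 g hg hgy).units_inv_left⟩ }
  have conj : ∀ (g : GL (Fin n) k) (u : Matrix (Fin n) (Fin n) k) (h : GL (Fin n) k),
      Commute (h : Matrix (Fin n) (Fin n) k)
        (((g⁻¹ : GL (Fin n) k) : Matrix (Fin n) (Fin n) k) * u * (g : Matrix (Fin n) (Fin n) k)) →
      Commute ((g * h * g⁻¹ : GL (Fin n) k) : Matrix (Fin n) (Fin n) k) u := by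
    intro g u h hc
    have hg : (g : Matrix (Fin n) (Fin n) k) * ((g⁻¹ : GL (Fin n) k) : Matrix (Fin n) (Fin n) k) = 1 := by
      rw [← Units.val_mul, mul_inv_cancel, Units.val_one]
    have h1 := congrArg (fun z => (g : Matrix (Fin n) (Fin n) k) * z * ((g⁻¹ : GL (Fin n) k) : Matrix (Fin n) (Fin n) k)) hc.eq
    rw [Commute, SemiconjBy, Units.val_mul, Units.val_mul]
    calc (g : Matrix (Fin n) (Fin n) k) * h * ((g⁻¹ : GL (Fin n) k) : Matrix (Fin n) (Fin n) k) * u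
        = g * (h * (((g⁻¹ : GL (Fin n) k) : Matrix (Fin n) (Fin n) k) * u * g)) * ((g⁻¹ : GL (Fin n) k) : Matrix (Fin n) (Fin n) k) := by
          simp only [mul_assoc]; rw [hg, mul_one]
      _ = _ := h1
      _ = _ := by simp only [← mul_assoc]; rw [hg, one_mul]
  refine comp_trivial hss H (fun h hh => hh.1) ?_ ?_ ?_ Z hZ ?_ h1
  · rintro g hg h ⟨hh1, hh2, hh3⟩
    refine ⟨G.mul_mem (G.mul_mem hg hh1) (G.inv_mem hg), fun y hy => conj g y h ?_, fun c hc hcy => conj g c h ?_⟩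
    · apply hh2
      simpa using hAd g⁻¹ (G.inv_mem hg) y hy
    · have h2 : ((g⁻¹ * c * g : GL (Fin n) k) : Matrix (Fin n) (Fin n) k) =
        ((g⁻¹ : GL (Fin n) k) : Matrix (Fin n) (Fin n) k) * c * (g : Matrix (Fin n) (Fin n) k) := by simp
      rw [← h2]
      refine hh3 _ (G.mul_mem (G.mul_mem (G.inv_mem hg) hc) hg) fun y hy => ?_
      have := conj g⁻¹ y c (by rw [inv_inv]; exact hcy _ (hAd g hg y hy))
      simpa using this
  · rintro b hb c hc
    ext1
    rw [Units.val_mul, Units.val_mul]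
    exact hb.2.2 c hc.1 hc.2.1
  · have : (H : Set (GL (Fin n) k)) = (G : Set (GL (Fin n) k)) ∩
      ((⋂ y ∈ a, {h : GL (Fin n) k | Commute (h : Matrix (Fin n) (Fin n) k) y}) ∩
       (⋂ c ∈ {c : GL (Fin n) k | c ∈ G ∧ ∀ y ∈ a, Commute (c : Matrix (Fin n) (Fin n) k) y},
          {h : GL (Fin n) k | Commute (h : Matrix (Fin n) (Fin n) k) c})) := by
      ext h
      simp only [Set.mem_inter_iff, Set.mem_iInter, Set.mem_ofPred_eq, SetLike.mem_coe, and_imp]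
      rfl
    rw [this]
    exact IsClosed.inter hcl (IsClosed.inter (isClosed_biInter fun _ _ => closed_comm _)
      (isClosed_biInter fun _ _ => closed_comm _))
  · intro z hz
    refine ⟨hZG hz, fun y hy => (hZx z hz y (hab y hy x hxa)).symm, fun c hc hcy => (hZx z hz c (hcy x hxa)).symm⟩

theorem laurent_ne [Infinite k] (f : LaurentPolynomial k) (hf : f ≠ 0) :
    ∃ t : kˣ, LaurentPolynomial.eval₂ (RingHom.id k) t f ≠ 0 := by
  obtain ⟨m, q, hq⟩ := LaurentPolynomial.exists_T_pow f
  by_contra hcon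
  push Not at hcon
  have hq0 : Polynomial.X * q ≠ 0 := by
    rintro h
    rcases mul_eq_zero.1 h with h | h
    · exact Polynomial.X_ne_zero h
    · rw [h, map_zero] at hq
      have h2 : (LaurentPolynomial.T (R := k) (m : ℤ)) * LaurentPolynomial.T (-(m : ℤ)) = 1 := by
        rw [← LaurentPolynomial.T_add]; simp
      apply hf
      rw [← mul_one f, ← h2, ← mul_assoc, ← hq, zero_mul]
  apply hq0
  apply Polynomial.funext
  intro t
  by_cases ht : t = 0
  · simp [ht]
  · have h1 := congrArg (LaurentPolynomial.eval₂ (RingHom.id k) (Units.mk0 t ht)) hq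
    rw [map_mul, hcon, zero_mul, LaurentPolynomial.eval₂_toLaurent] at h1
    rw [Polynomial.eval_mul, Polynomial.eval_zero]
    simp only [Polynomial.eval, Units.val_mk0] at h1 ⊢
    rw [h1, mul_zero]

theorem nexp_factor (N : Matrix (Fin n) (Fin n) k) (K : ℕ) (c : k) :
    ∃ U : Matrix (Fin n) (Fin n) k, Commute U N ∧ nexp N K c = 1 + U * N := by
  refine ⟨∑ m ∈ Finset.range K, c ^ (m + 1) • (((m + 1).factorial : k)⁻¹ • N ^ m), ?_, ?_⟩
  · exact Commute.sum_left _ _ _ fun m _ => ((Commute.refl N).pow_left m).smul_left _ |>.smul_left _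
  · rw [nexp, Finset.sum_range_succ', add_comm, Finset.sum_mul]
    simp only [map_algebraMap_self]
    congr 1
    · simp
    · refine Finset.sum_congr rfl fun m _ => ?_
      rw [Matrix.smul_mul, Matrix.smul_mul, ← pow_succ]

theorem nexp_unit (N : Matrix (Fin n) (Fin n) k) (K : ℕ) (hN : N ^ (K + 1) = 0) (c : k) :
    IsUnit (nexp N K c) := by
  obtain ⟨U, hU, h⟩ := nexp_factor N K c
  rw [h]
  exact IsNilpotent.isUnit_one_add (hU.isNilpotent_mul_left ⟨_, hN⟩)

theorem nexp_eq_one (N : Matrix (Fin n) (Fin n) k) (K : ℕ) (hN : N ^ (K + 1) = 0)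
    (h : nexp N (K + 1) (1 : k) = 1) : N = 0 := by
  have h1 : nexp N (K + 1) (1 : k) = 1 + (1 +
      (∑ m ∈ Finset.range K, (((m + 2).factorial : k)⁻¹ • N ^ m)) * N) * N := by
    rw [nexp, Finset.sum_range_succ', Finset.sum_range_succ', Finset.sum_mul, add_mul, Finset.sum_mul]
    simp only [map_algebraMap_self, one_pow, one_smul, Matrix.smul_mul, ← pow_succ]
    simp
    abel
  rw [h1] at h
  have h2 := add_eq_left.1 h
  have hc : Commute (∑ m ∈ Finset.range K, (((m + 2).factorial : k)⁻¹ • N ^ m)) N :=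
    Commute.sum_left _ _ _ fun m _ => ((Commute.refl N).pow_left m).smul_left _
  have hu : IsUnit (1 + (∑ m ∈ Finset.range K, (((m + 2).factorial : k)⁻¹ • N ^ m)) * N) :=
    IsNilpotent.isUnit_one_add (hc.isNilpotent_mul_left ⟨_, hN⟩)
  exact hu.mul_right_eq_zero.1 h2

theorem nexp_comm (N : Matrix (Fin n) (Fin n) k) (K : ℕ) (c : k) (h : Matrix (Fin n) (Fin n) k)
    (hh : Commute h N) : Commute h (nexp N K c) := by
  refine Commute.sum_right _ _ _ fun m _ => ?_
  rw [map_algebraMap_self]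
  exact ((hh.pow_right m).smul_right _).smul_right _

theorem two_zpow [CharZero k] (m : ℤ) (h : (2 : k) ^ m = 1) : m = 0 := by
  have h1 : ((2 : ℚ) ^ m) = 1 := by
    have : (((2 : ℚ) ^ m : ℚ) : k) = ((1 : ℚ) : k) := by push_cast; exact h
    exact_mod_cast this
  exact (zpow_eq_one_iff_right₀ (by norm_num) (by norm_num)).1 h1

theorem lemM [IsAlgClosed k] [CharZero k] {G : Subgroup (GL (Fin n) k)}
    (hcl : IsAlgSubgroup k G) (hss : IsSemisimpleSub k G)
    (a : Set (Matrix (Fin n) (Fin n) k)) (ha : a ⊆ gL G)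
    (hAd : ∀ h ∈ G, ∀ x ∈ a, (h : Matrix (Fin n) (Fin n) k) * x * ((h⁻¹ : GL (Fin n) k) : Matrix (Fin n) (Fin n) k) ∈ a)
    (hab : ∀ x ∈ a, ∀ y ∈ a, Commute x y) : ∀ x ∈ a, x = 0 := by
  intro x hxa
  obtain ⟨Q, Q', N, e, K, hQ, hN, hcomm, hx, hcx⟩ := jordan x
  have hQ' : Q' * Q = 1 := mul_eq_one_comm.1 hQ
  have hN1 : N ^ (K + 1 + 1) = 0 := by rw [pow_succ, hN, zero_mul]
  let ι : Submodule.span ℤ (Set.range e) →+ k := (Submodule.subtype _).toAddMonoidHom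
  have hι : Function.Injective ι := Subtype.val_injective
  let d : Fin n → Submodule.span ℤ (Set.range e) := fun i => ⟨e i, Submodule.subset_span ⟨i, rfl⟩⟩
  have hde : (fun i => ι (d i)) = e := rfl
  have hxg : dexp Q Q' (fun i => ι (d i)) + N ∈ gL G := by rw [hde, ← hx]; exact ha hxa
  -- unipotent part
  have hNz : N = 0 := by
    let u : k → GL (Fin n) k := fun c => (nexp_unit N (K + 1) hN1 c).unit
    have hu : ∀ c, (u c : Matrix (Fin n) (Fin n) k) = nexp N (K + 1) c := fun c => IsUnit.unit_spec _
    have := lemM1 hcl hss a hAd hab x hxa (Set.range u) ?_ ⟨0, ?_⟩ ?_ ?_ (u 1) ⟨1, rfl⟩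
    · apply nexp_eq_one N K hN
      rw [← hu, this, Units.val_one]
    · apply preconn_of
      rintro p q ⟨_, ⟨c1, rfl⟩, h1⟩ ⟨_, ⟨c2, rfl⟩, h2⟩
      have key : ∀ (c : k) (p : MvPolynomial (Fin n × Fin n) k), ev (u c : Matrix (Fin n) (Fin n) k) p =
          Polynomial.aeval c (ev (nexp N (K + 1) (Polynomial.X : Polynomial k)) p) := by
        intro c p
        rw [ev_map, nexp_map, hu, Polynomial.aeval_X]
      rw [key] at h1 h2
      have h3 : ev (nexp N (K + 1) (Polynomial.X : Polynomial k)) p *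
          ev (nexp N (K + 1) (Polynomial.X : Polynomial k)) q ≠ 0 := by
        apply mul_ne_zero
        · intro h; rw [h] at h1; simp at h1
        · intro h; rw [h] at h2; simp at h2
      obtain ⟨c, hc⟩ : ∃ c, Polynomial.eval c (ev (nexp N (K + 1) (Polynomial.X : Polynomial k)) p *
          ev (nexp N (K + 1) (Polynomial.X : Polynomial k)) q) ≠ 0 := by
        by_contra hcon
        push Not at hcon
        exact h3 (Polynomial.funext (by simpa using hcon))
      rw [Polynomial.eval_mul] at hc
      refine ⟨u c, ⟨c, rfl⟩, ?_, ?_⟩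
      · rw [key, Polynomial.coe_aeval_eq_eval]; exact left_ne_zero_of_mul hc
      · rw [key, Polynomial.coe_aeval_eq_eval]; exact right_ne_zero_of_mul hc
    · ext1; rw [hu, nexp_zero, Units.val_one]
    · rintro _ ⟨c, rfl⟩
      apply closed_mem hcl
      intro p hp
      have := replica hQ ι hι d (K + 1) hN1 (by rw [hde]; exact hcomm) hxg (1 : _ →* k) c hp
      simp only [MonoidHom.one_apply] at this
      rw [dexp_one hQ, one_mul] at this
      rw [hu, this]
    · rintro _ ⟨c, rfl⟩ h hh
      rw [hu]
      exact nexp_comm _ _ _ _ (hcx h hh).2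
  -- semisimple part
  have he : ∀ i, d i = 0 := by
    intro i
    by_contra hne
    obtain ⟨φ, hφ⟩ := exists_int_functional e (d i) hne
    apply hφ
    have hun : ∀ t : kˣ, dexp Q Q' (fun i => ((t ^ φ (d i) : kˣ) : k)) *
        dexp Q Q' (fun i => (((t⁻¹) ^ φ (d i) : kˣ) : k)) = 1 := by
      intro t
      rw [dexp_mul hQ']
      simp only [← Units.val_mul, ← mul_zpow, mul_inv_cancel, one_zpow, Units.val_one]
      exact dexp_one hQ
    let u : kˣ → GL (Fin n) k := fun t => ⟨dexp Q Q' (fun i => ((t ^ φ (d i) : kˣ) : k)),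
      dexp Q Q' (fun i => (((t⁻¹) ^ φ (d i) : kˣ) : k)), hun t, mul_eq_one_comm.1 (hun t)⟩
    have hu : ∀ t, (u t : Matrix (Fin n) (Fin n) k) = dexp Q Q' (fun i => ((t ^ φ (d i) : kˣ) : k)) :=
      fun t => rfl
    have := lemM1 hcl hss a hAd hab x hxa (Set.range u) ?_ ⟨1, ?_⟩ ?_ ?_
      (u (Units.mk0 2 (by norm_num))) ⟨_, rfl⟩
    · have h1 := congrArg (fun g : GL (Fin n) k => Q' * (g : Matrix (Fin n) (Fin n) k) * Q) this
      simp only [hu, dexp, map_algebraMap_self, Units.val_one, mul_one, hQ'] at h1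
      simp only [← mul_assoc, hQ', one_mul] at h1
      rw [mul_assoc, hQ', mul_one] at h1
      have h2 := congrFun (congrFun h1 i) i
      rw [Matrix.diagonal_apply_eq, Matrix.one_apply_eq] at h2
      apply two_zpow (k := k)
      simpa using h2
    · apply preconn_of
      rintro p q ⟨_, ⟨c1, rfl⟩, h1⟩ ⟨_, ⟨c2, rfl⟩, h2⟩
      let M : Matrix (Fin n) (Fin n) (LaurentPolynomial k) :=
        dexp Q Q' (fun i => LaurentPolynomial.T (φ (d i)))
      have key : ∀ (c : kˣ) (p : MvPolynomial (Fin n × Fin n) k), ev (u c : Matrix (Fin n) (Fin n) k) p =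
          LaurentPolynomial.eval₂ (RingHom.id k) c (ev M p) := by
        intro c p
        let F : LaurentPolynomial k →ₐ[k] k :=
          { LaurentPolynomial.eval₂ (RingHom.id k) c with
            commutes' := by
              intro r
              exact LaurentPolynomial.eval₂_C _ _ _ }
        have hF : ∀ f, F f = LaurentPolynomial.eval₂ (RingHom.id k) c f := fun f => rfl
        rw [← hF, ev_map, hu, dexp_map]
        simp only [hF, LaurentPolynomial.eval₂_T]
      rw [key] at h1 h2
      have h3 : ev M p * ev M q ≠ 0 := by
        apply mul_ne_zero
        · intro h; rw [h] at h1; simp at h1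
        · intro h; rw [h] at h2; simp at h2
      obtain ⟨c, hc⟩ := laurent_ne _ h3
      rw [map_mul] at hc
      refine ⟨u c, ⟨c, rfl⟩, ?_, ?_⟩
      · rw [key]; exact left_ne_zero_of_mul hc
      · rw [key]; exact right_ne_zero_of_mul hc
    · ext1; rw [hu, Units.val_one]
      simp only [one_zpow, Units.val_one]
      exact dexp_one hQ
    · rintro _ ⟨t, rfl⟩
      apply closed_mem hcl
      intro p hp
      let ψ : Multiplicative (Submodule.span ℤ (Set.range e)) →* k :=
        { toFun := fun l => ((t ^ φ l.toAdd : kˣ) : k)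
          map_one' := by simp
          map_mul' := by intro a b; simp [zpow_add] }
      have := replica hQ ι hι d K hN (by rw [hde]; exact hcomm) hxg ψ 0 hp
      rw [nexp_zero, mul_one] at this
      exact this
    · rintro _ ⟨t, rfl⟩ h hh
      rw [hu]
      refine dexp_comm hQ e _ ?_ h (hcx h hh).1
      intro i j hij
      have : d i = d j := Subtype.ext hij
      rw [this]
  have he0 : e = fun _ => 0 := by
    ext i
    have := congrArg Subtype.val (he i)
    exact this
  rw [hx, hNz, he0, add_zero, dexp]
  simp

end mine

section mine
variable {k : Type*} [Field k] {n : ℕ}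

section engel
attribute [local instance] LieRing.ofAssociativeRing

theorem engel_center {A : Type*} [Ring A] [Algebra k A] [Module.Finite k A] (r : Submodule k A)
    (hl : ∀ x ∈ r, ∀ y ∈ r, x * y - y * x ∈ r) (hnil : ∀ x ∈ r, IsNilpotent x) (hr : r ≠ ⊥) :
    ∃ z ∈ r, z ≠ 0 ∧ ∀ y ∈ r, Commute z y := by
  let L : LieSubalgebra k A := { r with lie_mem' := by intro x y hx hy; exact hl x hx y hy }
  have hL : ∀ x, x ∈ L ↔ x ∈ r := fun x => Iff.rfl
  have hfin : Module.Finite k L := inferInstanceAs (Module.Finite k r)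
  have hN : LieRing.IsNilpotent L := by
    rw [LieAlgebra.isNilpotent_iff_forall (R := k)]
    intro x
    exact LieAlgebra.isNilpotent_ad_of_isNilpotent (hnil _ x.2)
  have hnt : Nontrivial L := by
    obtain ⟨z, hz, hz0⟩ := Submodule.exists_mem_ne_zero_of_ne_bot hr
    exact ⟨⟨z, hz⟩, 0, fun h => hz0 (congrArg Subtype.val h)⟩
  have := LieModule.nontrivial_max_triv_of_isNilpotent k L L
  obtain ⟨⟨z, hz⟩, hz0⟩ := exists_ne (0 : LieModule.maxTrivSubmodule k L L)
  rw [LieModule.mem_maxTrivSubmodule] at hz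
  refine ⟨z, z.2, fun h => hz0 (Subtype.ext (Subtype.ext h)), fun y hy => ?_⟩
  have h1 := congrArg Subtype.val (hz ⟨y, hy⟩)
  exact (sub_eq_zero.1 h1).symm
end engel

theorem trace_dexp_mul {Q Q' : Matrix (Fin n) (Fin n) k} (hQ : Q' * Q = 1) (s t : Fin n → k) :
    (dexp Q Q' s * dexp Q Q' t).trace = ∑ i, s i * t i := by
  rw [dexp_mul hQ, dexp, map_algebraMap_self, map_algebraMap_self, Matrix.trace_mul_comm, ← mul_assoc, hQ, one_mul,
    Matrix.trace_diagonal]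

theorem rad_nil [IsAlgClosed k] [CharZero k] {G : Subgroup (GL (Fin n) k)}
    (x : Matrix (Fin n) (Fin n) k) (hxg : x ∈ gL G) (hx0 : ∀ y ∈ gL G, (x * y).trace = 0) :
    IsNilpotent x := by
  obtain ⟨Q, Q', N, e, K, hQ, hN, hcomm, hx, hcx⟩ := jordan x
  have hQ' : Q' * Q = 1 := mul_eq_one_comm.1 hQ
  let ι : Submodule.span ℤ (Set.range e) →+ k := (Submodule.subtype _).toAddMonoidHom
  have hι : Function.Injective ι := Subtype.val_injective
  let d : Fin n → Submodule.span ℤ (Set.range e) := fun i => ⟨e i, Submodule.subset_span ⟨i, rfl⟩⟩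
  have hde : (fun i => ι (d i)) = e := rfl
  rw [hx, ← hde] at hxg
  have he : ∀ i, d i = 0 := by
    intro i
    by_contra hne
    obtain ⟨φ, hφ⟩ := exists_int_functional e (d i) hne
    apply hφ
    have hs := replica_lie hQ ι hι d K hN (by rw [hde]; exact hcomm) hxg φ
    have h1 := hx0 _ hs
    have hcs : Commute N (dexp Q Q' (fun i => (φ (d i) : k))) := by
      refine dexp_comm hQ e _ ?_ N hcomm.symm
      intro i j hij
      have : d i = d j := Subtype.ext hij
      rw [this]
    have h2 : (N * dexp Q Q' (fun i => (φ (d i) : k))).trace = 0 :=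
      (Matrix.isNilpotent_trace_of_isNilpotent (hcs.isNilpotent_mul_right ⟨_, hN⟩)).eq_zero
    rw [hx, add_mul, Matrix.trace_add, h2, add_zero, trace_dexp_mul hQ'] at h1
    have h3 : ∑ i, φ (d i) • d i = 0 := by
      apply hι
      rw [map_sum, map_zero, ← h1]
      refine Finset.sum_congr rfl fun i _ => ?_
      rw [map_zsmul, zsmul_eq_mul, mul_comm]
      rfl
    have h4 := congrArg φ h3
    rw [map_sum, map_zero] at h4
    simp only [map_zsmul, smul_eq_mul] at h4
    rw [Finset.sum_eq_zero_iff_of_nonneg (fun i _ => mul_self_nonneg _)] at h4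
    exact mul_self_eq_zero.1 (h4 i (Finset.mem_univ i))
  have he0 : e = fun _ => 0 := by
    ext i
    have := congrArg Subtype.val (he i)
    exact this
  refine ⟨K + 1, ?_⟩
  have : dexp Q Q' e = 0 := by rw [he0, dexp]; simp
  rw [hx, this, zero_add, hN]

theorem nondeg [IsAlgClosed k] [CharZero k] {G : Subgroup (GL (Fin n) k)}
    (hcl : IsAlgSubgroup k G) (hss : IsSemisimpleSub k G)
    (x : Matrix (Fin n) (Fin n) k) (hxg : x ∈ gL G) (hx0 : ∀ y ∈ gL G, (x * y).trace = 0) :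
    x = 0 := by
  let r : Submodule k (Matrix (Fin n) (Fin n) k) :=
    { carrier := {x | x ∈ gL G ∧ ∀ y ∈ gL G, (x * y).trace = 0}
      add_mem' := by
        rintro a b ⟨ha, ha'⟩ ⟨hb, hb'⟩
        exact ⟨add_mem ha hb, fun y hy => by rw [add_mul, Matrix.trace_add, ha' y hy, hb' y hy, add_zero]⟩
      zero_mem' := ⟨zero_mem _, by simp⟩
      smul_mem' := by
        rintro c a ⟨ha, ha'⟩
        exact ⟨Submodule.smul_mem _ c ha, fun y hy => by
          rw [Matrix.smul_mul, Matrix.trace_smul, ha' y hy, smul_zero]⟩ }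
  have hr : ∀ x, x ∈ r ↔ x ∈ gL G ∧ ∀ y ∈ gL G, (x * y).trace = 0 := fun x => Iff.rfl
  have hrAd : ∀ h ∈ G, ∀ x ∈ r, (h : Matrix (Fin n) (Fin n) k) * x *
      ((h⁻¹ : GL (Fin n) k) : Matrix (Fin n) (Fin n) k) ∈ r := by
    intro h hh x hx
    refine ⟨gL_conj hx.1 hh, fun y hy => ?_⟩
    have := hx.2 _ (gL_conj hy (G.inv_mem hh))
    rw [inv_inv] at this
    rw [← this, mul_assoc, mul_assoc, Matrix.trace_mul_comm]
    simp only [mul_assoc]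
  by_contra hne
  have hrne : r ≠ ⊥ := fun h => hne ((Submodule.mem_bot k).1 (h ▸ (show x ∈ r from ⟨hxg, hx0⟩)))
  obtain ⟨z, hz, hz0, hzc⟩ := engel_center r (by
    intro x hx y hy
    refine ⟨gL_lie hx.1 hy.1, fun w hw => ?_⟩
    have := hx.2 _ (gL_lie hy.1 hw)
    rw [mul_sub, Matrix.trace_sub] at this
    rw [sub_mul, Matrix.trace_sub, ← this, mul_assoc, mul_assoc, Matrix.trace_mul_comm y (x * w), mul_assoc]) (fun x hx => rad_nil x hx.1 hx.2) hrne
  refine hz0 (lemM hcl hss {z | z ∈ r ∧ ∀ y ∈ r, Commute z y} (fun z hz => hz.1.1) ?_ ?_ z ⟨hz, hzc⟩)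
  · rintro h hh x ⟨hx, hxc⟩
    refine ⟨hrAd h hh x hx, fun y hy => ?_⟩
    have h1 := hxc _ (hrAd _ (G.inv_mem hh) y hy)
    rw [inv_inv] at h1
    have h2 : (h : Matrix (Fin n) (Fin n) k) * ((h⁻¹ : GL (Fin n) k) : Matrix (Fin n) (Fin n) k) = 1 := by
      rw [← Units.val_mul, mul_inv_cancel, Units.val_one]
    have h3 : ((h⁻¹ : GL (Fin n) k) : Matrix (Fin n) (Fin n) k) * (h : Matrix (Fin n) (Fin n) k) = 1 := by
      rw [← Units.val_mul, inv_mul_cancel, Units.val_one]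
    have h4 := h1.eq
    generalize ((h⁻¹ : GL (Fin n) k) : Matrix (Fin n) (Fin n) k) = a at *
    generalize (h : Matrix (Fin n) (Fin n) k) = b at *
    have h5 := congrArg (fun M => b * M * a) h4
    show b * x * a * y = y * (b * x * a)
    calc b * x * a * y = b * (x * (a * y * b)) * a := by simp only [mul_assoc, h2, mul_one]
      _ = b * (a * y * b * x) * a := h5
      _ = y * (b * x * a) := by simp only [← mul_assoc, h2, one_mul]
  · rintro x ⟨hx, hxc⟩ y ⟨hy, _⟩
    exact hxc y hy

end mine

section mine
variable {k : Type*} [Field k] {n : ℕ}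

theorem char_deriv [IsAlgClosed k] [CharZero k] {G : Subgroup (GL (Fin n) k)}
    (hconn : IsConnectedSub k G) (P : MvPolynomial (Fin n × Fin n) k)
    (h1 : ev (1 : Matrix (Fin n) (Fin n) k) P = 1)
    (hmul : ∀ g ∈ G, ∀ h ∈ G, ev ((g * h : GL (Fin n) k) : Matrix (Fin n) (Fin n) k) P =
      ev (g : Matrix (Fin n) (Fin n) k) P * ev (h : Matrix (Fin n) (Fin n) k) P)
    (hne : ∃ g ∈ G, ev (g : Matrix (Fin n) (Fin n) k) P ≠ 1) : ∃ x ∈ gL G, Td 1 x P ≠ 0 := by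
  have hpr := vI_prime hconn
  let A := MvPolynomial (Fin n × Fin n) k ⧸ vI G
  have hdom : IsDomain A := Ideal.Quotient.isDomain (vI G)
  let K := FractionRing A
  let j : A →ₐ[k] K := IsScalarTower.toAlgHom k A K
  have hj : Function.Injective j := IsFractionRing.injective A K
  let m : MvPolynomial (Fin n × Fin n) k →ₐ[k] A := Ideal.Quotient.mkₐ k (vI G)
  let F : MvPolynomial (Fin n × Fin n) k →ₐ[k] K := j.comp m
  have hF : ∀ p, F p = 0 ↔ p ∈ vI G := by
    intro p
    rw [← Ideal.Quotient.eq_zero_iff_mem]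
    exact map_eq_zero_iff j hj
  let Y : Matrix (Fin n) (Fin n) K := (genM k n).map F
  have hgen : ∀ p, ev (genM k n) p = p := by
    intro p
    exact MvPolynomial.aeval_X_left_apply p
  have hY : ∀ p, ev Y p = F p := by
    intro p
    rw [← ev_map, hgen]
  have htr : Transcendental k (F P) := by
    intro halg
    have hFint : IsIntegral k (F P) := halg.isIntegral
    have hdeg := IsAlgClosed.degree_eq_one_of_irreducible k (minpoly.irreducible hFint)
    obtain ⟨a, ha⟩ := minpoly.mem_range_of_degree_eq_one k (F P) hdeg
    have h2 : P - C a ∈ vI G := by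
      rw [← hF, map_sub, ← ha, MvPolynomial.C_eq_algebraMap, AlgHom.commutes, sub_self]
    have h3 : ∀ g ∈ G, ev (g : Matrix (Fin n) (Fin n) k) P = a := by
      intro g hg
      have := h2 g hg
      rw [map_sub, sub_eq_zero] at this
      rw [this]; simp [ev]
    obtain ⟨g, hg, hgne⟩ := hne
    apply hgne
    rw [h3 g hg, ← h3 1 G.one_mem, Units.val_one, h1]
  obtain ⟨d, hd⟩ := exists_derivation_ne (F P) htr
  obtain ⟨b, hb⟩ := IsLocalization.exist_integer_multiples_of_finite (nonZeroDivisors A)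
    (fun ij : Fin n × Fin n => d (Y ij.1 ij.2))
  choose W' hW' using hb
  choose W hW using fun ij => Ideal.Quotient.mk_surjective (W' ij)
  let WM : Matrix (Fin n) (Fin n) (MvPolynomial (Fin n × Fin n) k) := fun i j => W (i, j)
  have hWM : WM.map F = (algebraMap A K b) • Y.map d := by
    ext i l
    have h2 := hW' (i, l)
    have h3 : F (WM i l) = algebraMap A K (W' (i, l)) := by
      rw [← hW]; rfl
    rw [Matrix.map_apply, h3, h2, Matrix.smul_apply, Matrix.map_apply]
    exact Algebra.smul_def _ _
  have hb0 : algebraMap A K b ≠ 0 := by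
    intro h
    exact nonZeroDivisors.coe_ne_zero b (hj (by rw [map_zero]; exact h))
  have hT : ∀ p, F (Td (genM k n) WM p) = algebraMap A K b * d (F p) := by
    intro p
    rw [Td_map, hWM, Td_smul_right, ← hY p, deriv_ev]
  have hTv : ∀ p ∈ vI G, Td (genM k n) WM p ∈ vI G := by
    intro p hp
    rw [← hF, hT, (hF p).2 hp, map_zero, mul_zero]
  have hTP : Td (genM k n) WM P ∉ vI G := by
    rw [← hF, hT]
    exact mul_ne_zero hb0 hd
  rw [mem_vI] at hTP
  push Not at hTP
  obtain ⟨g, hg, hgP⟩ := hTP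
  have hev : ∀ p : MvPolynomial (Fin n × Fin n) k, ev (g : Matrix (Fin n) (Fin n) k) (Td (genM k n) WM p) =
      Td (g : Matrix (Fin n) (Fin n) k) (WM.map (ev (g : Matrix (Fin n) (Fin n) k))) p := by
    intro p
    rw [Td_map, genmat_map]
  rw [hev] at hgP
  have hv : ∀ p ∈ vI G, Td (g : Matrix (Fin n) (Fin n) k)
      (WM.map (ev (g : Matrix (Fin n) (Fin n) k))) p = 0 := by
    intro p hp
    rw [← hev]
    exact hTv p hp g hg
  generalize WM.map (ev (g : Matrix (Fin n) (Fin n) k)) = U at hgP hv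
  have hgi : ((g⁻¹ : GL (Fin n) k) : Matrix (Fin n) (Fin n) k) * (g : Matrix (Fin n) (Fin n) k) = 1 := by
    rw [← Units.val_mul, inv_mul_cancel, Units.val_one]
  have hgi' : (g : Matrix (Fin n) (Fin n) k) * ((g⁻¹ : GL (Fin n) k) : Matrix (Fin n) (Fin n) k) = 1 := by
    rw [← Units.val_mul, mul_inv_cancel, Units.val_one]
  have hx : ((g⁻¹ : GL (Fin n) k) : Matrix (Fin n) (Fin n) k) * U ∈ gL G := by
    intro p hp
    have := hv _ (tr2_mem_vI hp (G.inv_mem hg) G.one_mem)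
    rw [Td_tr2, map_algebraMap_self, map_algebraMap_self, hgi, Units.val_one, mul_one, mul_one] at this
    exact this
  refine ⟨_, hx, fun h0 => hgP ?_⟩
  have h2 : tr2 (g : Matrix (Fin n) (Fin n) k) 1 P - ev (g : Matrix (Fin n) (Fin n) k) P • P ∈ vI G := by
    intro h hh
    rw [map_sub, ev_tr2, map_algebraMap_self, map_algebraMap_self, mul_one, map_smul, smul_eq_mul,
      ← Units.val_mul, hmul g hg h hh, sub_self]
  have h3 := hx _ h2
  rw [Td_sub, Td_smul, h0, smul_zero, sub_zero, Td_tr2, map_algebraMap_self, map_algebraMap_self,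
    mul_one, mul_one, mul_one, ← mul_assoc, hgi', one_mul] at h3
  exact h3

theorem char_trivial [IsAlgClosed k] [CharZero k] {G : Subgroup (GL (Fin n) k)}
    (hcl : IsAlgSubgroup k G) (hconn : IsConnectedSub k G) (hss : IsSemisimpleSub k G)
    (P : MvPolynomial (Fin n × Fin n) k)
    (h1 : ev (1 : Matrix (Fin n) (Fin n) k) P = 1)
    (hmul : ∀ g ∈ G, ∀ h ∈ G, ev ((g * h : GL (Fin n) k) : Matrix (Fin n) (Fin n) k) P =
      ev (g : Matrix (Fin n) (Fin n) k) P * ev (h : Matrix (Fin n) (Fin n) k) P) :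
    ∀ g ∈ G, ev (g : Matrix (Fin n) (Fin n) k) P = 1 := by
  by_contra hcon
  push Not at hcon
  obtain ⟨x, hx, hxP⟩ := char_deriv hconn P h1 hmul hcon
  let ℓ : gL G →ₗ[k] k :=
    { toFun := fun y => Td 1 (y : Matrix (Fin n) (Fin n) k) P
      map_add' := by intro a b; exact Td_add_right _ _ _ _
      map_smul' := by intro c a; exact Td_smul_right _ _ _ _ }
  let B : gL G →ₗ[k] Module.Dual k (gL G) :=
    LinearMap.mk₂ k (fun a b => ((a : Matrix (Fin n) (Fin n) k) * (b : Matrix (Fin n) (Fin n) k)).trace)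
      (by intro a b c; simp [add_mul]) (by intro c a b; simp)
      (by intro a b c; simp [mul_add]) (by intro c a b; simp)
  have hBi : Function.Injective B := by
    rw [injective_iff_map_eq_zero]
    intro a ha
    apply Subtype.ext
    apply nondeg hcl hss _ a.2
    intro y hy
    exact LinearMap.congr_fun ha ⟨y, hy⟩
  have hBs : Function.Surjective B :=
    (LinearMap.injective_iff_surjective_of_finrank_eq_finrank
      (Subspace.dual_finrank_eq (K := k) (V := gL G)).symm).1 hBi
  obtain ⟨⟨z, hz⟩, hzl⟩ := hBs ℓ
  have hzl' : ∀ y ∈ gL G, (z * y).trace = Td 1 y P := by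
    intro y hy
    exact LinearMap.congr_fun hzl ⟨y, hy⟩
  have hinv : ∀ h ∈ G, ∀ y ∈ gL G, Td 1 ((h : Matrix (Fin n) (Fin n) k) * y *
      ((h⁻¹ : GL (Fin n) k) : Matrix (Fin n) (Fin n) k)) P = Td 1 y P := by
    intro h hh y hy
    have h2 : tr2 (h : Matrix (Fin n) (Fin n) k) ((h⁻¹ : GL (Fin n) k) : Matrix (Fin n) (Fin n) k) P - P ∈ vI G := by
      intro g hg
      rw [map_sub, ev_tr2, map_algebraMap_self, map_algebraMap_self, ← Units.val_mul, ← Units.val_mul,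
        hmul _ (G.mul_mem hh hg) _ (G.inv_mem hh), hmul h hh g hg, mul_right_comm,
        ← hmul h hh _ (G.inv_mem hh), mul_inv_cancel, Units.val_one, h1, one_mul, sub_self]
    have h3 := hy _ h2
    rw [Td_sub, Td_tr2, map_algebraMap_self, map_algebraMap_self, mul_one, ← Units.val_mul,
      mul_inv_cancel, sub_eq_zero] at h3
    exact h3
  have hzc : ∀ h ∈ G, (h : Matrix (Fin n) (Fin n) k) * z *
      ((h⁻¹ : GL (Fin n) k) : Matrix (Fin n) (Fin n) k) = z := by
    intro h hh
    rw [← sub_eq_zero]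
    apply nondeg hcl hss _ (sub_mem (gL_conj hz hh) hz)
    intro y hy
    have h4 := gL_conj hy (G.inv_mem hh)
    have h5 := hzl' _ h4
    have h6 := hinv _ (G.inv_mem hh) y hy
    rw [inv_inv] at h5 h6
    rw [sub_mul, Matrix.trace_sub, sub_eq_zero, hzl' y hy, ← h6, ← h5, mul_assoc, mul_assoc,
      Matrix.trace_mul_comm]
    simp only [mul_assoc]
  have hz0 := lemM hcl hss {z} (by simpa using hz) (by
    rintro h hh x hx
    rw [Set.mem_singleton_iff] at hx ⊢
    rw [hx, hzc h hh]) (by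
    rintro x hx y hy
    rw [Set.mem_singleton_iff] at hx hy
    rw [hx, hy]) z rfl
  apply hxP
  rw [← hzl' x hx, hz0]
  simp

end mine

section mine
variable {k : Type*} [Field k] {n : ℕ}

/-- `g ↦ q (g v)` as a polynomial in the entries of `g`. -/
def orbP (v : Fin n → k) (q : MvPolynomial (Fin n) k) : MvPolynomial (Fin n × Fin n) k :=
  aeval (fun i => ∑ j, X (i, j) * C (v j)) q

theorem ev_orbP (g : Matrix (Fin n) (Fin n) k) (v : Fin n → k) (q : MvPolynomial (Fin n) k) :
    ev g (orbP v q) = eval (g.mulVec v) q := by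
  have h : (ev g).comp (aeval (fun i => ∑ j, X (i, j) * C (v j))) =
      aeval (R := k) (g.mulVec v) := by
    apply MvPolynomial.algHom_ext
    intro i
    simp [ev, Matrix.mulVec, dotProduct]
  have h2 := congrArg (fun f => f q) h
  simpa [MvPolynomial.coe_aeval_eq_eval, orbP] using h2

/-- The substitution `q ↦ q ∘ g`. -/
def actP (g : Matrix (Fin n) (Fin n) k) : MvPolynomial (Fin n) k →ₐ[k] MvPolynomial (Fin n) k :=
  aeval (fun i => ∑ j, C (g i j) * X j)

theorem eval_actP (g : Matrix (Fin n) (Fin n) k) (v : Fin n → k) (q : MvPolynomial (Fin n) k) :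
    eval v (actP g q) = eval (g.mulVec v) q := by
  have h : (aeval (R := k) v).comp (actP g) = aeval (R := k) (g.mulVec v) := by
    apply MvPolynomial.algHom_ext
    intro i
    simp [actP, Matrix.mulVec, dotProduct]
  have h2 := congrArg (fun f => f q) h
  simpa [MvPolynomial.coe_aeval_eq_eval] using h2

theorem actP_irr [Infinite k] (g : GL (Fin n) k) (q : MvPolynomial (Fin n) k) (hq : Irreducible q) :
    Irreducible (actP (g : Matrix (Fin n) (Fin n) k) q) := by
  have h2 : (g : Matrix (Fin n) (Fin n) k) * ((g⁻¹ : GL (Fin n) k) : Matrix (Fin n) (Fin n) k) = 1 := by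
    rw [← Units.val_mul, mul_inv_cancel, Units.val_one]
  have h3 : ((g⁻¹ : GL (Fin n) k) : Matrix (Fin n) (Fin n) k) * (g : Matrix (Fin n) (Fin n) k) = 1 := by
    rw [← Units.val_mul, inv_mul_cancel, Units.val_one]
  let E : MvPolynomial (Fin n) k ≃ₐ[k] MvPolynomial (Fin n) k :=
    AlgEquiv.ofAlgHom (actP (g : Matrix (Fin n) (Fin n) k))
      (actP ((g⁻¹ : GL (Fin n) k) : Matrix (Fin n) (Fin n) k))
      (by
        apply AlgHom.ext
        intro p
        apply MvPolynomial.funext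
        intro v
        simp only [AlgHom.comp_apply, eval_actP, Matrix.mulVec_mulVec, h3, Matrix.one_mulVec, AlgHom.id_apply])
      (by
        apply AlgHom.ext
        intro p
        apply MvPolynomial.funext
        intro v
        simp only [AlgHom.comp_apply, eval_actP, Matrix.mulVec_mulVec, h2, Matrix.one_mulVec, AlgHom.id_apply])
  exact (MulEquiv.irreducible_iff E.toMulEquiv).2 hq

theorem exists_eval_ne [Infinite k] {q : MvPolynomial (Fin n) k} (hq : q ≠ 0) : ∃ v, eval v q ≠ 0 := by
  by_contra hcon
  push Not at hcon
  exact hq (MvPolynomial.funext (by simpa using hcon))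

theorem factor_inv [IsAlgClosed k] [CharZero k] {G : Subgroup (GL (Fin n) k)}
    (hcl : IsAlgSubgroup k G) (hconn : IsConnectedSub k G) (hss : IsSemisimpleSub k G)
    {p q : MvPolynomial (Fin n) k} (hp : p ∈ invAlg k G) (hp0 : p ≠ 0) (hq : Irreducible q)
    (hqp : q ∣ p) : q ∈ invAlg k G := by
  classical
  have hpr := vI_prime hconn
  have hact : ∀ g ∈ G, actP (g : Matrix (Fin n) (Fin n) k) p = p := by
    intro g hg
    apply MvPolynomial.funext
    intro v
    rw [eval_actP]; exact hp g hg v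
  have hfac : ∀ g ∈ G, ∃ q' ∈ UniqueFactorizationMonoid.factors p,
      ∀ v w, eval ((g : Matrix (Fin n) (Fin n) k).mulVec v) q * eval w q' =
        eval ((g : Matrix (Fin n) (Fin n) k).mulVec w) q * eval v q' := by
    intro g hg
    have hd : actP (g : Matrix (Fin n) (Fin n) k) q ∣ p := by
      rw [← hact g hg]; exact map_dvd _ hqp
    obtain ⟨q', hq', u, hu⟩ := UniqueFactorizationMonoid.exists_mem_factors_of_dvd hp0 (actP_irr g q hq) hd
    refine ⟨q', hq', fun v w => ?_⟩
    obtain ⟨c, hc, hcu⟩ := MvPolynomial.isUnit_iff_eq_C_of_isReduced.1 u.isUnit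
    rw [← hu, hcu, ← eval_actP, ← eval_actP]
    simp
    ring
  obtain ⟨q', hq', hR⟩ : ∃ q' ∈ UniqueFactorizationMonoid.factors p, ∀ v w,
      orbP v q * C (eval w q') - orbP w q * C (eval v q') ∈ vI G := by
    by_contra hcon
    push Not at hcon
    choose! v w hvw using hcon
    have h1 : ∏ q' ∈ (UniqueFactorizationMonoid.factors p).toFinset,
        (orbP (v q') q * C (eval (w q') q') - orbP (w q') q * C (eval (v q') q')) ∈ vI G := by
      intro g hg
      obtain ⟨q', hq', h⟩ := hfac g hg
      rw [map_prod]
      apply Finset.prod_eq_zero (Multiset.mem_toFinset.2 hq')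
      rw [map_sub, map_mul, map_mul, ev_orbP, ev_orbP, sub_eq_zero]
      simpa [ev] using h _ _
    rw [hpr.prod_mem_iff] at h1
    obtain ⟨q', hq', h⟩ := h1
    exact hvw q' (Multiset.mem_toFinset.1 hq') h
  have hR' : ∀ g ∈ G, ∀ v w, eval ((g : Matrix (Fin n) (Fin n) k).mulVec v) q * eval w q' =
        eval ((g : Matrix (Fin n) (Fin n) k).mulVec w) q * eval v q' := by
    intro g hg v w
    have := hR v w g hg
    rw [map_sub, map_mul, map_mul, ev_orbP, ev_orbP, sub_eq_zero] at this
    simpa [ev] using this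
  have hq'0 : q' ≠ 0 := (UniqueFactorizationMonoid.irreducible_of_factor q' hq').ne_zero
  obtain ⟨w, hw⟩ := exists_eval_ne hq'0
  have hR1 : ∀ v, eval v q * eval w q' = eval w q * eval v q' := by
    intro v
    have := hR' 1 G.one_mem v w
    simpa using this
  have hqw : eval w q ≠ 0 := by
    intro h
    obtain ⟨v, hv⟩ := exists_eval_ne hq.ne_zero
    have := hR1 v
    rw [h, zero_mul] at this
    exact mul_ne_zero hv hw this
  have hsemi : ∀ g ∈ G, ∀ v, eval ((g : Matrix (Fin n) (Fin n) k).mulVec v) q * eval w q =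
      eval ((g : Matrix (Fin n) (Fin n) k).mulVec w) q * eval v q := by
    intro g hg v
    apply mul_right_cancel₀ hw
    have h1 := hR' g hg v w
    have h2 := hR1 v
    linear_combination (eval w q) * h1 - (eval ((g : Matrix (Fin n) (Fin n) k).mulVec w) q) * h2
  let P : MvPolynomial (Fin n × Fin n) k := C (eval w q)⁻¹ * orbP w q
  have hP : ∀ g : Matrix (Fin n) (Fin n) k, ev g P = (eval w q)⁻¹ * eval (g.mulVec w) q := by
    intro g
    rw [map_mul, ev_orbP]
    simp [ev]
  have hP1 := char_trivial hcl hconn hss P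
    (by rw [hP, Matrix.one_mulVec, inv_mul_cancel₀ hqw])
    (by
      intro g hg h hh
      rw [hP, hP, hP, Units.val_mul, ← Matrix.mulVec_mulVec]
      have := hsemi g hg ((h : Matrix (Fin n) (Fin n) k).mulVec w)
      field_simp
      rw [mul_comm]
      exact this)
  intro g hg v
  have h1 := hP1 g hg
  rw [hP] at h1
  have h2 : eval ((g : Matrix (Fin n) (Fin n) k).mulVec w) q = eval w q := by
    field_simp at h1
    exact h1
  have h3 := hsemi g hg v
  rw [h2, mul_comm] at h3
  exact mul_left_cancel₀ hqw h3

theorem exists_gen [IsAlgClosed k] [CharZero k] {G : Subgroup (GL (Fin n) k)}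
    (hcl : IsAlgSubgroup k G) (hconn : IsConnectedSub k G) (hss : IsSemisimpleSub k G)
    (hdim : ringKrullDim (invAlg k G) = 1) :
    ∃ f : MvPolynomial (Fin n) k, Irreducible f ∧ eval 0 f = 0 ∧
      nullcone k G = {v | eval v f = 0} := by
  let θ : invAlg k G →+* k := (eval (0 : Fin n → k)).comp (invAlg k G).val.toRingHom
  have hθ : ∀ a, θ a = eval (0 : Fin n → k) (a : MvPolynomial (Fin n) k) := fun a => rfl
  have hθs : Function.Surjective θ := fun c => ⟨algebraMap k _ c, by rw [hθ]; simp⟩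
  have hex : ∃ a : invAlg k G, a ≠ 0 ∧ θ a = 0 := by
    by_contra hcon
    push Not at hcon
    have hinj : Function.Injective θ := by
      rw [injective_iff_map_eq_zero]
      intro a ha
      by_contra h
      exact hcon a h ha
    have := ringKrullDim_eq_of_ringEquiv (RingEquiv.ofBijective θ ⟨hinj, hθs⟩)
    rw [hdim, ringKrullDim_eq_zero_of_field] at this
    exact one_ne_zero this
  obtain ⟨⟨p, hp⟩, hp0, hpθ⟩ := hex
  have hp0' : p ≠ 0 := fun h => hp0 (Subtype.ext h)
  rw [hθ] at hpθ
  obtain ⟨f, hff, hf0⟩ : ∃ f ∈ UniqueFactorizationMonoid.factors p, eval (0 : Fin n → k) f = 0 := by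
    obtain ⟨u, hu⟩ := UniqueFactorizationMonoid.factors_prod hp0'
    have h1 := congrArg (eval (0 : Fin n → k)) hu
    rw [map_mul, hpθ] at h1
    have h2 : eval (0 : Fin n → k) (u : MvPolynomial (Fin n) k) ≠ 0 :=
      (u.isUnit.map (eval (0 : Fin n → k))).ne_zero
    have h3 := (mul_eq_zero.1 h1).resolve_right h2
    rw [map_multiset_prod, Multiset.prod_eq_zero_iff, Multiset.mem_map] at h3
    exact h3
  have hfi : Irreducible f := UniqueFactorizationMonoid.irreducible_of_factor f hff
  have hfp : f ∣ p := UniqueFactorizationMonoid.dvd_of_mem_factors hff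
  have hfA : f ∈ invAlg k G := factor_inv hcl hconn hss hp hp0' hfi hfp
  have hspan : (Ideal.span {f}).IsPrime :=
    (Ideal.span_singleton_prime hfi.ne_zero).2 hfi.prime
  let I : Ideal (invAlg k G) := (Ideal.span {f}).comap (invAlg k G).val.toRingHom
  have hI : ∀ a : invAlg k G, a ∈ I ↔ f ∣ (a : MvPolynomial (Fin n) k) := by
    intro a
    exact Ideal.mem_span_singleton
  have hIp : I.IsPrime := Ideal.comap_isPrime _ _
  have hIne : I ≠ ⊥ := by
    intro h
    have : (⟨f, hfA⟩ : invAlg k G) ∈ I := (hI _).2 dvd_rfl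
    rw [h, Ideal.mem_bot] at this
    exact hfi.ne_zero (congrArg Subtype.val this)
  have hbot : (⊥ : Ideal (invAlg k G)).IsPrime := Ideal.isPrime_bot
  have hKD : Ring.KrullDimLE 1 (invAlg k G) := Ring.krullDimLE_iff.2 (by rw [hdim]; rfl)
  have hImax := Ring.krullDimLE_one_iff_of_isPrime_bot.1 hKD I hIne hIp
  have hIle : I ≤ RingHom.ker θ := by
    intro a ha
    rw [hI] at ha
    obtain ⟨b, hb⟩ := ha
    rw [RingHom.mem_ker, hθ, hb, map_mul, hf0, zero_mul]
  have hIeq := hImax.eq_of_le (RingHom.ker_ne_top θ) hIle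
  refine ⟨f, hfi, hf0, ?_⟩
  ext v
  constructor
  · intro hv
    have := hv f hfA
    rw [hf0] at this
    exact this
  · intro hv a ha
    have h1 : (⟨a - C (eval 0 a), sub_mem ha ((invAlg k G).algebraMap_mem (eval 0 a))⟩ : invAlg k G) ∈ I := by
      rw [hIeq, RingHom.mem_ker, hθ]
      simp
    rw [hI] at h1
    obtain ⟨b, hb⟩ := h1
    have h2 := congrArg (eval v) hb
    rw [map_mul, show eval v f = 0 from hv, zero_mul, map_sub, eval_C, sub_eq_zero] at h2
    exact h2

theorem hyp_irred [IsAlgClosed k] (f : MvPolynomial (Fin n) k) (hf : Irreducible f)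
    (hf0 : eval 0 f = 0) : @IsIrreducible _ (zTop k (Fin n)) {v : Fin n → k | eval v f = 0} := by
  refine ⟨⟨0, hf0⟩, ?_⟩
  rintro u v hu hv ⟨x, hx, hxu⟩ ⟨y, hy, hyv⟩
  obtain ⟨p, hp, hpu⟩ := zTop_nhd hu hxu
  obtain ⟨q, hq, hqv⟩ := zTop_nhd hv hyv
  have hspan : (Ideal.span {f}).IsPrime :=
    (Ideal.span_singleton_prime hf.ne_zero).2 hf.prime
  have key : ∃ z, eval z f = 0 ∧ eval z (p * q) ≠ 0 := by
    by_contra hcon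
    push Not at hcon
    have h1 : p * q ∈ vanishingIdeal k (zeroLocus k (Ideal.span {f})) := by
      rw [mem_vanishingIdeal_iff]
      intro z hz
      rw [mem_zeroLocus_iff] at hz
      have h2 := hz f (Ideal.mem_span_singleton_self f)
      have h3 := hcon z h2
      exact h3
    rw [vanishingIdeal_zeroLocus_eq_radical, hspan.radical, Ideal.mem_span_singleton] at h1
    rcases hf.prime.dvd_or_dvd h1 with ⟨b, hb⟩ | ⟨b, hb⟩
    · apply hp
      rw [hb, map_mul, show eval x f = 0 from hx, zero_mul]
    · apply hq
      rw [hb, map_mul, show eval y f = 0 from hy, zero_mul]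
  obtain ⟨z, hz, hz2⟩ := key
  rw [map_mul] at hz2
  exact ⟨z, hz, hpu (left_ne_zero_of_mul hz2), hqv (right_ne_zero_of_mul hz2)⟩

end mine

/-- If `dim V⫽G = 1`, the nullcone is irreducible. -/
theorem stmt4 {k : Type*} [Field k] [IsAlgClosed k] [CharZero k] {n : ℕ}
    (G : Subgroup (GL (Fin n) k))
    (hcl : IsAlgSubgroup k G) (hconn : IsConnectedSub k G) (hss : IsSemisimpleSub k G)
    (hdim : ringKrullDim (invAlg k G) = 1) :
    @IsIrreducible _ (zTop k (Fin n)) (nullcone k G) := by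
  obtain ⟨f, hf, hf0, hN⟩ := exists_gen hcl hconn hss hdim
  rw [hN]
  exact hyp_irred f hf hf0

end
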